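/- Support of multiplication coefficients: assume axiom (C0): there exists a regular dominant ρ' ∈ V₀ such that for every λ ∈ Λ₊ there is a unique p ∈ P^W of degree ℓ(λ) with p(ρ'+μ) = δ_{λμ} for all μ ∈ Λ₊ with ℓ(μ) ≤ ℓ(λ). Let ρ ∈ V₀ be dominant. Then for every h ∈ P^W, μ ∈ Λ₊ and η ∈ Γ^∨, one has a_η^h(μ) = 0 unless η ∈ Λ and ℓ(η) ≤ deg h. -/

import Mathlib

/-
Common framework for F. Knop, "Construction of Commuting Difference Operators
for Multiplicity Free Spaces".

We identify `Γ` with `ι → ℤ` via its basis `Σ` (so `Σ` is the standard basis),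
`Γ^∨` with `ι → ℤ` via the dual basis `Σ^∨`, and `V = Hom(Γ, ℂ)` with `ι → ℂ`.
-/

open scoped BigOperators Classical
open MvPolynomial

noncomputable section

namespace Knop

variable {ι : Type*} [Fintype ι] [DecidableEq ι]

/-- The `i`-th element of the basis `Σ` of `Γ` (resp. of `Σ^∨ ⊆ Γ^∨`), in coordinates. -/
def e (i : ι) : ι → ℤ := Pi.single i 1

/-- The pairing between `Γ` and `Γ^∨` (in coordinates, the dot product);
`pairZ γ η = γ(η) = η(γ)`. -/
def pairZ (γ η : ι → ℤ) : ℤ := ∑ i, γ i * η i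

/-- Evaluation of `γ ∈ Γ` as a linear function on `V = Hom(Γ,ℂ) ≅ ι → ℂ`. -/
def evalC (γ : ι → ℤ) (z : ι → ℂ) : ℂ := ∑ i, (γ i : ℂ) * z i

/-- The embedding `Γ^∨ ⊆ V`. -/
def toV (η : ι → ℤ) : ι → ℂ := fun i => (η i : ℂ)

/-- The action of `w ∈ Aut(Γ)` on `V = Hom(Γ, ℂ)`: `(w • z)(γ) = z(w⁻¹ γ)`, in coordinates. -/
def actV (w : (ι → ℤ) ≃ₗ[ℤ] (ι → ℤ)) (z : ι → ℂ) : ι → ℂ :=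
  fun i => evalC (w.symm (e i)) z

/-- The action of `w ∈ Aut(Γ)` on `Γ^∨ = Hom(Γ, ℤ)`: `(w • η)(γ) = η(w⁻¹ γ)`. -/
def actDual (w : (ι → ℤ) ≃ₗ[ℤ] (ι → ℤ)) (η : ι → ℤ) : ι → ℤ :=
  fun i => pairZ (w.symm (e i)) η

/-- `Λ₊`, the `ℕ`-span of `Σ^∨` inside `Γ^∨`. -/
def LamPlus : Set (ι → ℤ) := {η | ∀ i, 0 ≤ η i}

/-- The reflection `s_α(x) = x - α^∨(x)·α` attached to a root `α` with coroot `αv`. -/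
def reflMap (α αv : ι → ℤ) : (ι → ℤ) → (ι → ℤ) := fun x => x - pairZ x αv • α

/-- The data `(Γ, Σ, W, ℓ)` together with the axioms C1–C8 of Knop's paper
(in the coordinates given by `Σ`).  The root system `Δ` of `W`, the set
`Φ = W·Σ`, and `Λ₁ = W·Σ^∨₁` are carried along as `Finset`s with their
defining specifications. -/
structure Data (ι : Type*) [Fintype ι] [DecidableEq ι] where
  /-- the reflection group `W ⊆ Aut(Γ)` -/
  W : Subgroup ((ι → ℤ) ≃ₗ[ℤ] (ι → ℤ))
  /-- `W` is finite -/
  W_finite : (W : Set ((ι → ℤ) ≃ₗ[ℤ] (ι → ℤ))).Finite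
  /-- the element `ℓ ∈ Γ` -/
  ell : ι → ℤ
  /-- the set of roots `Δ ⊆ Γ` of `W` -/
  Δ : Finset (ι → ℤ)
  /-- the coroot `α^∨ ∈ Γ^∨` of a root `α` -/
  coroot : (ι → ℤ) → (ι → ℤ)
  /-- `Φ = W·Σ` -/
  Φ : Finset (ι → ℤ)
  /-- `Λ₁ = W·Σ^∨₁` -/
  Λ₁ : Finset (ι → ℤ)
  Φ_spec : ∀ ω, ω ∈ Φ ↔ ∃ w ∈ W, ∃ i, ω = w (e i)
  Λ₁_spec : ∀ η, η ∈ Λ₁ ↔ ∃ w ∈ W, ∃ i, ell i = 1 ∧ η = actDual w (e i)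
  /-- `Δ = -Δ` -/
  Δ_neg : ∀ α ∈ Δ, -α ∈ Δ
  /-- every root is a primitive vector of `Γ` -/
  Δ_prim : ∀ α ∈ Δ, ∀ (n : ℤ) (β : ι → ℤ), α = n • β → IsUnit n
  /-- the reflection `s_α` belongs to `W` -/
  refl_mem : ∀ α ∈ Δ, ∃ w ∈ W, ∀ x, w x = reflMap α (coroot α) x
  /-- `α^∨(α) = 2` -/
  coroot_pair : ∀ α ∈ Δ, pairZ α (coroot α) = 2
  /-- C1: `W` is generated by the reflections `s_α`, `α ∈ Δ` -/
  C1 : W ≤ Subgroup.closure {w : (ι → ℤ) ≃ₗ[ℤ] (ι → ℤ) |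
        ∃ α ∈ Δ, ∀ x, w x = reflMap α (coroot α) x}
  /-- C2: `Δ = Δ⁺ ∪ (-Δ⁺)` -/
  C2 : ∀ α ∈ Δ, (∀ i, 0 ≤ α i) ∨ (∀ i, α i ≤ 0)
  /-- C3: `Φ ⊆ Φ⁺ ∪ (-Φ⁺)` -/
  C3 : ∀ ω ∈ Φ, (∀ i, 0 ≤ ω i) ∨ (∀ i, ω i ≤ 0)
  /-- C4: `ℓ ∈ Γ^W` -/
  C4 : ∀ w ∈ W, w ell = ell
  /-- C5: `Σ_{ω ∈ Φ⁺} ω - Σ_{α ∈ Δ⁺} α = ℓ` -/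
  C5 : (∑ ω ∈ Φ.filter (fun ω => ∀ i, 0 ≤ ω i), ω)
        - (∑ α ∈ Δ.filter (fun α => ∀ i, 0 ≤ α i), α) = ell
  /-- C6: `ℓ(η) > 0` for all `η ∈ Σ^∨` -/
  C6 : ∀ i, 0 < ell i
  /-- C7: `ω(η) ∈ {-1,0,1}` for `η ∈ Σ^∨₁` and `ω ∈ Δ ∪ Φ` -/
  C7 : ∀ i, ell i = 1 → ∀ ω, (ω ∈ Δ ∨ ω ∈ Φ) → ω i = -1 ∨ ω i = 0 ∨ ω i = 1
  /-- C8: a `W`-invariant linear function on `V` is determined by its restriction to `Σ^∨₁` -/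
  C8 : ∀ c c' : ι → ℂ,
    (∀ w ∈ W, ∀ z : ι → ℂ, ∑ i, c i * actV w z i = ∑ i, c i * z i) →
    (∀ w ∈ W, ∀ z : ι → ℂ, ∑ i, c' i * actV w z i = ∑ i, c' i * z i) →
    (∀ i, ell i = 1 → c i = c' i) → c = c'

namespace Data

variable (D : Data ι)

/-- `Δ⁺`, the positive roots. -/
def Δpos : Finset (ι → ℤ) := D.Δ.filter fun α => ∀ i, 0 ≤ α i

/-- `Φ⁺`. -/
def Φpos : Finset (ι → ℤ) := D.Φ.filter fun ω => ∀ i, 0 ≤ ω i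

/-- The submonoid `Λ` of `Γ^∨` generated by `Λ₁`. -/
def Lam : AddSubmonoid (ι → ℤ) := AddSubmonoid.closure (D.Λ₁ : Set (ι → ℤ))

/-- `ρ ∈ V₀`: `ω₁(ρ) = ω₂(ρ)` whenever `ω₁, ω₂ ∈ Σ` lie in the same `±W`-orbit. -/
def InV0 (ρ : ι → ℂ) : Prop :=
  ∀ i j : ι, (∃ w ∈ D.W, e i = w (e j) ∨ e i = -(w (e j))) → ρ i = ρ j

/-- `k` is the multiplicity-parameter function of `ρ ∈ V₀`:
`k_ω = ω₁(ρ)` for any `ω₁ ∈ (±W)·ω ∩ Σ`. -/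
def IsK (ρ : ι → ℂ) (k : (ι → ℤ) → ℂ) : Prop :=
  ∀ (ω : ι → ℤ) (i : ι), (∃ w ∈ D.W, e i = w ω ∨ e i = -(w ω)) → k ω = ρ i

/-- `ρ` is dominant: `α(ρ) ∉ {-1,-2,…}` for all `α ∈ Δ⁺`. -/
def Dominant (ρ : ι → ℂ) : Prop :=
  ∀ α ∈ D.Δpos, ∀ n : ℕ, evalC α ρ ≠ -((n : ℂ) + 1)

/-- `ρ` is regular: `α(ρ) ≠ 0` for all `α ∈ Δ⁺`. -/
def Regular (ρ : ι → ℂ) : Prop :=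
  ∀ α ∈ D.Δpos, evalC α ρ ≠ 0

/-- `ρ` is non-integral: `α(ρ) ∉ ℤ` for all `α ∈ Δ`. -/
def NonIntegral (ρ : ι → ℂ) : Prop :=
  ∀ α ∈ D.Δ, ∀ n : ℤ, evalC α ρ ≠ (n : ℂ)

/-- `ρ` is strongly dominant (`k` being the parameter function of `ρ`). -/
def StronglyDominant (ρ : ι → ℂ) (k : (ι → ℤ) → ℂ) : Prop :=
  D.Regular ρ ∧ D.Dominant ρ ∧
    ∀ ω ∈ D.Φpos, (∀ n : ℕ, evalC ω ρ - k ω ≠ -((n : ℂ) + 1)) ∧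
      (∀ n : ℕ, evalC ω ρ + k ω ≠ -(n : ℂ))

/-- The rational function `f_η`, `η ∈ Λ₁`. -/
def f (k : (ι → ℤ) → ℂ) (η : ι → ℤ) (z : ι → ℂ) : ℂ :=
  (∏ ω ∈ D.Φ.filter (fun ω => 0 < pairZ ω η), (evalC ω z - k ω)) /
  (∏ α ∈ D.Δ.filter (fun α => 0 < pairZ α η), evalC α z)

/-- The value at `z` of `L(p) = Σ_{η ∈ Λ₁} f_η T_η (p)`. -/
def Lval (k : (ι → ℤ) → ℂ) (p : MvPolynomial ι ℂ) (z : ι → ℂ) : ℂ :=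
  ∑ η ∈ D.Λ₁, D.f k η z * eval (z - toV η) p

/-- `W`-invariance of a polynomial function on `V`. -/
def WInv (p : MvPolynomial ι ℂ) : Prop :=
  ∀ w ∈ D.W, ∀ z : ι → ℂ, eval (actV w z) p = eval z p

/-- The defining property of the Capelli polynomial `p_λ` (with shift `ρ`):
`p` is `W`-invariant of degree `≤ ℓ(λ)` and `p(ρ+μ) = δ_{λμ}` for all
`μ ∈ Λ₊` with `ℓ(μ) ≤ ℓ(λ)`. -/
def CapelliAt (ρ : ι → ℂ) (lam : ι → ℤ) (p : MvPolynomial ι ℂ) : Prop :=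
  D.WInv p ∧ (p.totalDegree : ℤ) ≤ pairZ D.ell lam ∧
    ∀ μ : ι → ℤ, μ ∈ LamPlus → pairZ D.ell μ ≤ pairZ D.ell lam →
      eval (ρ + toV μ) p = if μ = lam then 1 else 0

/-- Axiom C0: for some regular dominant `ρ' ∈ V₀` and every `λ ∈ Λ₊` there is a
unique `W`-invariant polynomial of degree `ℓ(λ)` with `p(ρ'+μ) = δ_{λμ}` for all
`μ ∈ Λ₊` with `ℓ(μ) ≤ ℓ(λ)`. -/
def C0 : Prop :=
  ∃ ρ' : ι → ℂ, D.InV0 ρ' ∧ D.Regular ρ' ∧ D.Dominant ρ' ∧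
    ∀ lam : ι → ℤ, lam ∈ LamPlus →
      ∃! p : MvPolynomial ι ℂ, D.WInv p ∧
        p.totalDegree = (pairZ D.ell lam).toNat ∧
        ∀ μ : ι → ℤ, μ ∈ LamPlus → pairZ D.ell μ ≤ pairZ D.ell lam →
          eval (ρ' + toV μ) p = if μ = lam then 1 else 0

end Data

/-- The `m`-th point `τ_m` of the path starting at `lam` with step sequence `s`
(steps are meant to lie in `Λ₁`). -/
def pathPt (lam : ι → ℤ) {d : ℕ} (s : Fin d → ι → ℤ) (m : ℕ) : ι → ℤ :=
  lam + ∑ i ∈ Finset.univ.filter (fun i : Fin d => (i : ℕ) < m), s i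

/-- All paths of length `d` from `lam` to `mu` (with steps in `Λ₁`), encoded by
their step sequences. -/
def paths (D : Data ι) (lam mu : ι → ℤ) (d : ℕ) : Finset (Fin d → ι → ℤ) :=
  (Fintype.piFinset fun _ : Fin d => D.Λ₁).filter fun s => pathPt lam s d = mu

/-- All positive paths of length `d` from `lam` to `mu`. -/
def posPaths (D : Data ι) (lam mu : ι → ℤ) (d : ℕ) : Finset (Fin d → ι → ℤ) :=
  (Fintype.piFinset fun _ : Fin d => D.Λ₁).filter fun s =>
    (∀ m ≤ d, pathPt lam s m ∈ LamPlus) ∧ pathPt lam s d = mu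

/-- The falling factorial `[x ↓ d] = x(x-1)⋯(x-d+1)`. -/
def ffall (x : ℂ) (d : ℤ) : ℂ := ∏ j ∈ Finset.range d.toNat, (x - (j : ℂ))

namespace Data

variable (D : Data ι)

/-- The generalized rational function `f_τ`, `τ ∈ Λ` (formula (Def-f-l)). -/
def fgen (k : (ι → ℤ) → ℂ) (τ : ι → ℤ) (z : ι → ℂ) : ℂ :=
  (∏ ω ∈ D.Φ.filter (fun ω => 0 < pairZ ω τ), ffall (evalC ω z - k ω) (pairZ ω τ)) /
  (∏ α ∈ D.Δ.filter (fun α => 0 < pairZ α τ), ffall (evalC α z) (pairZ α τ))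

/-- The virtual dimension `d_λ = (-1)^{ℓ(λ)} f_λ(-ρ) / f_λ(ρ+λ)`. -/
def vdim (k : (ι → ℤ) → ℂ) (ρ : ι → ℂ) (lam : ι → ℤ) : ℂ :=
  (-1 : ℂ) ^ (pairZ D.ell lam) * D.fgen k lam (-ρ) / D.fgen k lam (ρ + toV lam)

/-- The rational function `b_τ^h` (formula (Def-b-t)); here the sum runs over
all paths from `0` to `τ` of length `d = ℓ(τ)`. -/
def bfun (k : (ι → ℤ) → ℂ) (h : MvPolynomial ι ℂ) (τ : ι → ℤ) (z : ι → ℂ) : ℂ :=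
  ∑ s ∈ paths D 0 τ (pairZ D.ell τ).toNat,
    (∑ i ∈ Finset.range ((pairZ D.ell τ).toNat + 1),
      ((-1 : ℂ) ^ ((pairZ D.ell τ).toNat - i) /
        ((Nat.factorial i : ℂ) * (Nat.factorial ((pairZ D.ell τ).toNat - i) : ℂ))) *
        eval (z - toV (pathPt 0 s i)) h) *
    ∏ i : Fin (pairZ D.ell τ).toNat, D.fgen k (s i) (z - toV (pathPt 0 s (i : ℕ)))

/-- The difference operator `D_h = Σ_{τ ∈ Λ} b_τ^h T_τ`, acting on functions on `V`. -/
def Dop (k : (ι → ℤ) → ℂ) (h : MvPolynomial ι ℂ) (F : (ι → ℂ) → ℂ) (z : ι → ℂ) : ℂ :=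
  ∑ᶠ τ ∈ (D.Lam : Set (ι → ℤ)), D.bfun k h τ z * F (z - toV τ)

/-- The order relation on `Λ`: `τ₁ ≤ τ₂` iff `ℓ(τ₁) < ℓ(τ₂)`, or
`ℓ(τ₁) = ℓ(τ₂)` and `τ₂ - τ₁` is a sum of positive coroots. -/
def ordLe (τ₁ τ₂ : ι → ℤ) : Prop :=
  pairZ D.ell τ₁ < pairZ D.ell τ₂ ∨
    (pairZ D.ell τ₁ = pairZ D.ell τ₂ ∧
      τ₂ - τ₁ ∈ AddSubmonoid.closure (D.coroot '' (D.Δpos : Set (ι → ℤ))))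

end Data

/-!
The difference operator `L = Σ_{η ∈ Λ₁} f_η T_η` maps invariant polynomials to invariant
polynomials, and `p ↦ ℓ p - L(p)` preserves degrees. For generic `ρ` its value on `p_λ` is
therefore determined by the interpolation nodes, which gives `L(p_λ) = (ℓ - ℓ(ρ + λ)) p_λ`.
Evaluating this at `ρ + μ` and inducting on `ℓ(μ)` yields the extra vanishing `p_λ(ρ + μ) = 0`
unless `μ - λ ∈ Λ`, and a continuity argument along `ρ + (t, …, t)` removes the genericity
assumption. Hence `h p_μ` vanishes at `ρ + κ` unless `κ - μ ∈ Λ`, and comparing values in order of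
increasing `ℓ` shows that its expansion involves only `p_ν` with `ν - μ ∈ Λ`. The bound
`ℓ(η) ≤ deg h` holds because the `p_ν` with `ℓ(ν) ≤ d` span the invariants of degree at most `d`.
-/

section Pairing

variable {σ : Type*}

lemma toV_zero : toV (0 : σ → ℤ) = 0 := by
  ext i; simp only [toV, Pi.zero_apply, Int.cast_zero]

lemma toV_sub (η θ : σ → ℤ) : toV (η - θ) = toV η - toV θ := by
  ext i; simp only [toV, Pi.sub_apply, Int.cast_sub]

lemma toV_ne_zero {η : σ → ℤ} (hη : η ≠ 0) : toV η ≠ 0 := fun h =>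
  hη (funext fun i => by simpa [toV] using congr_fun h i)

lemma toV_e [DecidableEq σ] (i : σ) : toV (e i) = Pi.single i 1 := by
  ext j; simp [toV, e, Pi.single_apply]

variable [Fintype σ]

lemma pairZ_eq_linearCombination (γ η : σ → ℤ) :
    pairZ γ η = Fintype.linearCombination ℤ η γ := by
  simp [pairZ, Fintype.linearCombination_apply]

lemma evalC_eq_linearCombination (γ : σ → ℤ) (z : σ → ℂ) :
    evalC γ z = Fintype.linearCombination ℤ z γ := by
  simp [evalC, Fintype.linearCombination_apply]

lemma pairZ_neg_left (γ η : σ → ℤ) : pairZ (-γ) η = -pairZ γ η := neg_dotProduct γ η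

lemma pairZ_add_right (γ η θ : σ → ℤ) : pairZ γ (η + θ) = pairZ γ η + pairZ γ θ :=
  dotProduct_add γ η θ

lemma pairZ_sub_right (γ η θ : σ → ℤ) : pairZ γ (η - θ) = pairZ γ η - pairZ γ θ :=
  dotProduct_sub γ η θ

lemma pairZ_zero_right (γ : σ → ℤ) : pairZ γ 0 = 0 := dotProduct_zero γ

lemma evalC_sub_left (γ δ : σ → ℤ) (z : σ → ℂ) : evalC (γ - δ) z = evalC γ z - evalC δ z := by
  simp only [evalC_eq_linearCombination, map_sub]

lemma evalC_smul_left (n : ℤ) (γ : σ → ℤ) (z : σ → ℂ) : evalC (n • γ) z = n * evalC γ z := by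
  rw [evalC_eq_linearCombination, map_smul, ← evalC_eq_linearCombination, zsmul_eq_mul]

lemma evalC_add_right (γ : σ → ℤ) (y z : σ → ℂ) : evalC γ (y + z) = evalC γ y + evalC γ z :=
  dotProduct_add (toV γ) y z

lemma evalC_sub_right (γ : σ → ℤ) (y z : σ → ℂ) : evalC γ (y - z) = evalC γ y - evalC γ z :=
  dotProduct_sub (toV γ) y z

lemma evalC_const (γ : σ → ℤ) (t : ℂ) : evalC γ (fun _ => t) = (∑ i, (γ i : ℂ)) * t := by
  rw [evalC, Finset.sum_mul]

lemma evalC_toV (γ η : σ → ℤ) : evalC γ (toV η) = (pairZ γ η : ℂ) := by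
  simp only [evalC, toV, pairZ, Int.cast_sum, Int.cast_mul]

section Basis

variable [DecidableEq σ]

lemma pairZ_e_left (i : σ) (η : σ → ℤ) : pairZ (e i) η = η i := single_one_dotProduct i η

lemma pairZ_e_right (γ : σ → ℤ) (i : σ) : pairZ γ (e i) = γ i := dotProduct_single_one γ i

lemma evalC_e (i : σ) (z : σ → ℂ) : evalC (e i) z = z i := by
  rw [evalC_eq_linearCombination, e, Fintype.linearCombination_apply_single, one_smul]

end Basis

lemma evalC_left_injective {y z : σ → ℂ} (h : ∀ γ, evalC γ y = evalC γ z) : y = z := by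
  classical
  ext i; simpa only [evalC_e] using h (e i)

lemma pairZ_left_injective {η θ : σ → ℤ} (h : ∀ γ, pairZ γ η = pairZ γ θ) : η = θ := by
  classical
  ext i; simpa only [pairZ_e_left] using h (e i)

end Pairing

section Action

variable (w : (ι → ℤ) ≃ₗ[ℤ] (ι → ℤ))

lemma evalC_actV (γ : ι → ℤ) (z : ι → ℂ) : evalC γ (actV w z) = evalC (w.symm γ) z := by
  have hlin : Fintype.linearCombination ℤ (actV w z) =
      Fintype.linearCombination ℤ z ∘ₗ w.symm.toLinearMap := by
    ext i
    simp [actV, evalC_eq_linearCombination, e]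
  simp only [evalC_eq_linearCombination, hlin, LinearMap.comp_apply, LinearEquiv.coe_coe]

lemma pairZ_actDual (γ η : ι → ℤ) : pairZ γ (actDual w η) = pairZ (w.symm γ) η := by
  have hlin : Fintype.linearCombination ℤ (actDual w η) =
      Fintype.linearCombination ℤ η ∘ₗ w.symm.toLinearMap := by
    ext i
    simp [actDual, pairZ_eq_linearCombination, e]
  simp only [pairZ_eq_linearCombination, hlin, LinearMap.comp_apply, LinearEquiv.coe_coe]

lemma toV_actDual (η : ι → ℤ) : toV (actDual w η) = actV w (toV η) :=
  evalC_left_injective fun γ => by rw [evalC_toV, pairZ_actDual, evalC_actV, evalC_toV]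

lemma actV_add (y z : ι → ℂ) : actV w (y + z) = actV w y + actV w z :=
  evalC_left_injective fun γ => by simp only [evalC_actV, evalC_add_right]

lemma actV_sub (y z : ι → ℂ) : actV w (y - z) = actV w y - actV w z :=
  evalC_left_injective fun γ => by simp only [evalC_actV, evalC_sub_right]

lemma actDual_mul (u : (ι → ℤ) ≃ₗ[ℤ] (ι → ℤ)) (η : ι → ℤ) :
    actDual (u * w) η = actDual u (actDual w η) :=
  pairZ_left_injective fun γ => by simp only [pairZ_actDual]; rfl

lemma actDual_one (η : ι → ℤ) : actDual 1 η = η :=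
  pairZ_left_injective fun γ => by rw [pairZ_actDual]; rfl

end Action

section Degree

variable {σ R : Type*} [CommRing R]

variable (σ R) in
/-- The polynomials of total degree less than `n`. Unlike the condition `p.totalDegree < n`, this
contains the zero polynomial even when `n = 0`. -/
def degreeLT (n : ℕ) : Submodule R (MvPolynomial σ R) :=
  restrictSupport R {s | s.degree < n}

lemma degreeLT_succ (n : ℕ) : degreeLT σ R (n + 1) = restrictTotalDegree σ R n := by
  simp only [degreeLT, Nat.lt_succ_iff]; rfl

lemma mem_degreeLT_succ {p : MvPolynomial σ R} {n : ℕ} :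
    p ∈ degreeLT σ R (n + 1) ↔ p.totalDegree ≤ n := by
  rw [degreeLT_succ, mem_restrictTotalDegree]

lemma degreeLT_mono {m n : ℕ} (hmn : m ≤ n) : degreeLT σ R m ≤ degreeLT σ R n :=
  restrictSupport_mono R fun _ hs => lt_of_lt_of_le hs hmn

lemma mem_degreeLT_iff_of_ne_zero {p : MvPolynomial σ R} (hp : p ≠ 0) {n : ℕ} :
    p ∈ degreeLT σ R n ↔ p.totalDegree < n := by
  cases n with
  | zero =>
    obtain ⟨s, hs⟩ := Finset.nonempty_of_ne_empty (support_eq_empty.not.mpr hp)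
    exact iff_of_false (fun h => Nat.not_lt_zero _ (h hs)) (Nat.not_lt_zero _)
  | succ n => rw [mem_degreeLT_succ, Nat.lt_succ_iff]

lemma mem_degreeLT_of_mul_mem [IsDomain R] {p q : MvPolynomial σ R} (hp : p ≠ 0) {n : ℕ}
    (h : p * q ∈ degreeLT σ R (p.totalDegree + n)) : q ∈ degreeLT σ R n := by
  rcases eq_or_ne q 0 with rfl | hq
  · exact zero_mem _
  rw [mem_degreeLT_iff_of_ne_zero (mul_ne_zero hp hq), totalDegree_mul_of_isDomain hp hq] at h
  exact (mem_degreeLT_iff_of_ne_zero hq).mpr (by omega)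

open scoped Pointwise in
lemma mul_mem_degreeLT {p q : MvPolynomial σ R} {m n : ℕ} (hp : p.totalDegree ≤ m)
    (hq : q ∈ degreeLT σ R n) : p * q ∈ degreeLT σ R (m + n) := by
  have hsub : {s : σ →₀ ℕ | s.degree ≤ m} + {s : σ →₀ ℕ | s.degree < n} ⊆
      {s | s.degree < m + n} := by
    rintro _ ⟨s, hs, t, ht, rfl⟩
    simpa only [Set.mem_ofPred_eq, map_add] using add_lt_add_of_le_of_lt hs ht
  refine restrictSupport_mono R hsub ?_
  rw [restrictSupport_add]
  exact Submodule.mul_mem_mul ((mem_restrictTotalDegree _ _ _).mpr hp) hq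

/-- Two polynomials of degree at most `n` with the same homogeneous part of degree `n`. -/
structure LeadingEq (n : ℕ) (p q : MvPolynomial σ R) : Prop where
  left_le : p.totalDegree ≤ n
  right_le : q.totalDegree ≤ n
  sub_mem : p - q ∈ degreeLT σ R n

namespace LeadingEq

lemma refl {p : MvPolynomial σ R} {n : ℕ} (hp : p.totalDegree ≤ n) : LeadingEq n p p :=
  ⟨hp, hp, by rw [sub_self]; exact zero_mem _⟩

lemma mono {m n : ℕ} {p q : MvPolynomial σ R} (h : LeadingEq m p q) (hmn : m ≤ n) :
    LeadingEq n p q :=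
  ⟨h.left_le.trans hmn, h.right_le.trans hmn, degreeLT_mono hmn h.sub_mem⟩

lemma mul {m n : ℕ} {p q p' q' : MvPolynomial σ R} (h : LeadingEq m p q)
    (h' : LeadingEq n p' q') : LeadingEq (m + n) (p * p') (q * q') where
  left_le := (totalDegree_mul _ _).trans (add_le_add h.left_le h'.left_le)
  right_le := (totalDegree_mul _ _).trans (add_le_add h.right_le h'.right_le)
  sub_mem := by
    have hsplit : p * p' - q * q' = p * (p' - q') + q' * (p - q) := by ring
    rw [hsplit]
    refine add_mem (mul_mem_degreeLT h.left_le h'.sub_mem) ?_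
    rw [add_comm m n]
    exact mul_mem_degreeLT h'.right_le h.sub_mem

lemma prod {κ : Type*} (s : Finset κ) {f g : κ → MvPolynomial σ R} {n : κ → ℕ}
    (h : ∀ i ∈ s, LeadingEq (n i) (f i) (g i)) :
    LeadingEq (∑ i ∈ s, n i) (∏ i ∈ s, f i) (∏ i ∈ s, g i) := by
  induction s using Finset.cons_induction with
  | empty => exact ⟨by simp, by simp, by simp⟩
  | cons i s hi ih =>
    simp only [Finset.prod_cons, Finset.sum_cons]
    exact (h i (Finset.mem_cons_self i s)).mul
      (ih fun j hj => h j (Finset.mem_cons_of_mem hj))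

lemma pow {m : ℕ} {p q : MvPolynomial σ R} (h : LeadingEq m p q) (k : ℕ) :
    LeadingEq (k * m) (p ^ k) (q ^ k) := by
  simpa using prod (Finset.range k) fun _ _ => h

lemma sub_C {p : MvPolynomial σ R} (hp : p.totalDegree ≤ 1) (a b : R) :
    LeadingEq 1 (p - C a) (p - C b) where
  left_le := (totalDegree_sub_C_le _ _).trans hp
  right_le := (totalDegree_sub_C_le _ _).trans hp
  sub_mem := by
    rw [mem_degreeLT_succ, sub_sub_sub_cancel_left, ← C_sub, totalDegree_C]

end LeadingEq

/-- The translate `z ↦ p (z - v)` of a polynomial function `p`. -/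
def translate (v : σ → R) : MvPolynomial σ R →ₐ[R] MvPolynomial σ R :=
  aeval fun i => X i - C (v i)

lemma eval_translate (v z : σ → R) (p : MvPolynomial σ R) :
    eval z (translate v p) = eval (z - v) p := by
  change aeval z (aeval _ p) = aeval (z - v) p
  rw [← AlgHom.comp_apply, comp_aeval]
  simp only [map_sub, aeval_X, aeval_C, Algebra.algebraMap_self, RingHom.id_apply]
  rfl

lemma leadingEq_translate_monomial (v : σ → R) (s : σ →₀ ℕ) :
    LeadingEq s.degree (monomial s 1) (translate v (monomial s 1)) := by
  rw [translate, aeval_monomial, monomial_eq, map_one, map_one, one_mul, one_mul]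
  refine LeadingEq.prod s.support fun i _ => ?_
  have hX : LeadingEq 1 (X i) (X i - C (v i)) := by
    simpa using LeadingEq.sub_C (R := R) (p := X i)
      ((totalDegree_monomial_le _ _).trans (by simp)) 0 (v i)
  simpa using hX.pow (s i)

lemma sub_translate_mem_degreeLT (v : σ → R) {p : MvPolynomial σ R} {d : ℕ}
    (hp : p.totalDegree ≤ d) : p - translate v p ∈ degreeLT σ R d := by
  suffices hle : restrictTotalDegree σ R d ≤
      (degreeLT σ R d).comap (LinearMap.id - (translate v).toLinearMap) from
    hle ((mem_restrictTotalDegree _ _ _).mpr hp)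
  rw [restrictTotalDegree, restrictSupport_eq_span, Submodule.span_le]
  rintro _ ⟨s, hs, rfl⟩
  exact degreeLT_mono hs (leadingEq_translate_monomial v s).sub_mem

end Degree

section LinearForm

variable {σ R : Type*} [Fintype σ] [CommRing R]

/-- The linear form with coefficient vector `c`. -/
def linearForm (c : σ → R) : MvPolynomial σ R := ∑ i, C (c i) * X i

lemma eval_linearForm (c z : σ → R) : eval z (linearForm c) = c ⬝ᵥ z := by
  simp [linearForm, dotProduct]

lemma linearForm_smul (a : R) (c : σ → R) : linearForm (a • c) = C a * linearForm c := by
  simp [linearForm, Finset.mul_sum, mul_assoc]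

lemma linearForm_neg (c : σ → R) : linearForm (-c) = -linearForm c := by
  simp [linearForm]

lemma isHomogeneous_linearForm (c : σ → R) : (linearForm c).IsHomogeneous 1 :=
  IsHomogeneous.sum _ _ _ fun i _ => by simpa using (isHomogeneous_X R i).C_mul (c i)

lemma linearForm_injective : Function.Injective (linearForm : (σ → R) → MvPolynomial σ R) := by
  intro c d h
  ext i
  simpa [eval_linearForm] using congr_arg (eval (Pi.single i 1)) h

lemma linearForm_ne_zero {c : σ → R} (hc : c ≠ 0) : linearForm c ≠ 0 := fun h =>
  hc (linearForm_injective (h.trans (by simp [linearForm])))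

lemma totalDegree_linearForm_le (c : σ → R) : (linearForm c).totalDegree ≤ 1 :=
  (isHomogeneous_linearForm c).totalDegree_le

lemma totalDegree_linearForm {c : σ → R} (hc : c ≠ 0) : (linearForm c).totalDegree = 1 :=
  (isHomogeneous_linearForm c).totalDegree (linearForm_ne_zero hc)

lemma totalDegree_prod_linearForm [IsDomain R] {κ : Type*} (s : Finset κ) {c : κ → σ → R}
    (hc : ∀ i ∈ s, c i ≠ 0) : (∏ i ∈ s, linearForm (c i)).totalDegree = s.card := by
  have hhom := IsHomogeneous.prod s (fun i => linearForm (c i)) (fun _ => 1)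
    fun i _ => isHomogeneous_linearForm (c i)
  simpa using hhom.totalDegree
    (Finset.prod_ne_zero_iff.mpr fun i hi => linearForm_ne_zero (hc i hi))

lemma exists_eq_C_add_linearForm {p : MvPolynomial σ R} (hp : p.totalDegree ≤ 1) :
    ∃ a c, p = C a + linearForm c := by
  have hsum : p = ∑ n ∈ Finset.range 2, homogeneousComponent n p := by
    conv_lhs => rw [← sum_homogeneousComponent p]
    refine Finset.sum_subset (Finset.range_subset_range.mpr (by omega)) fun n _ hn => ?_
    exact homogeneousComponent_eq_zero n p (by simpa using hn)
  obtain ⟨c, hc⟩ := (Submodule.mem_span_range_iff_exists_fun R).mp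
    (homogeneousSubmodule_one_eq_span_X (R := R) (σ := σ) ▸ homogeneousComponent_mem 1 p)
  refine ⟨coeff 0 p, c, ?_⟩
  conv_lhs =>
    rw [hsum, Finset.sum_range_succ, Finset.sum_range_one, homogeneousComponent_zero, ← hc]
  simp only [linearForm, smul_eq_C_mul]

end LinearForm

section LinearFormField

variable {σ K : Type*} [Fintype σ] [Field K]

lemma irreducible_linearForm {c : σ → K} (hc : c ≠ 0) : Irreducible (linearForm c) := by
  refine irreducible_of_totalDegree_eq_one (totalDegree_linearForm hc) fun a ha => ?_
  rw [isUnit_iff_ne_zero]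
  rintro rfl
  exact linearForm_ne_zero hc (by ext s; simpa using ha s)

lemma exists_eq_smul_of_linearForm_dvd {c d : σ → K} (h : linearForm c ∣ linearForm d) :
    ∃ a : K, d = a • c := by
  rcases eq_or_ne d 0 with rfl | hd
  · exact ⟨0, (zero_smul K c).symm⟩
  obtain ⟨q, hq⟩ := h
  obtain ⟨hc, hq0⟩ := mul_ne_zero_iff.mp (hq ▸ linearForm_ne_zero hd)
  have hc0 : c ≠ 0 := by rintro rfl; exact hc (by simp [linearForm])
  have hdeg := totalDegree_mul_of_isDomain hc hq0
  rw [← hq, totalDegree_linearForm hd, totalDegree_linearForm hc0] at hdeg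
  obtain ⟨a, rfl⟩ : ∃ a, q = C a := ⟨_, totalDegree_eq_zero_iff_eq_C.mp (by omega)⟩
  exact ⟨a, linearForm_injective (by rw [hq, linearForm_smul, mul_comm])⟩

lemma linearForm_dvd_of_forall_eval_eq_zero [IsAlgClosed K] {c : σ → K} (hc : c ≠ 0)
    {p : MvPolynomial σ K} (hp : ∀ z, c ⬝ᵥ z = 0 → eval z p = 0) : linearForm c ∣ p := by
  have hprime : (Ideal.span {linearForm c}).IsPrime :=
    (Ideal.span_singleton_prime (linearForm_ne_zero hc)).mpr (irreducible_linearForm hc).prime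
  rw [← Ideal.mem_span_singleton, ← IsPrime.vanishingIdeal_zeroLocus (K := K)
    (Ideal.span {linearForm c}), mem_vanishingIdeal_iff]
  intro z hz
  simp only [zeroLocus_span, Set.mem_singleton_iff, forall_eq] at hz
  exact hp z ((eval_linearForm c z).symm.trans hz)

end LinearFormField

section Primitive

variable {σ : Type*}

lemma isUnit_of_smul_eq_smul {α β : σ → ℤ} (hα : ∀ (n : ℤ) γ, α = n • γ → IsUnit n) {a b : ℤ}
    (hab : IsCoprime a b) (h : a • β = b • α) : IsUnit a := by
  obtain ⟨u, v, huv⟩ := hab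
  refine hα a (u • α + v • β) ?_
  calc α = (u * a + v * b) • α := by rw [huv, one_smul]
    _ = a • (u • α + v • β) := by
      rw [smul_add, smul_comm a v, h, add_smul, mul_smul, mul_smul, smul_comm u a]

lemma eq_or_eq_neg_of_primitive {α β : σ → ℤ} (hα : ∀ (n : ℤ) γ, α = n • γ → IsUnit n)
    (hβ : ∀ (n : ℤ) γ, β = n • γ → IsUnit n) (hα0 : α ≠ 0)
    (hprop : ∀ i j, α j * β i = α i * β j) : α = β ∨ α = -β := by
  obtain ⟨j, hj⟩ := Function.ne_iff.mp hα0
  obtain ⟨a, b, hab, ha, hb⟩ := Int.exists_gcd_one (Int.gcd_pos_of_ne_zero_left (β j) hj)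
  set g : ℤ := (Int.gcd (α j) (β j) : ℤ)
  have hg : g ≠ 0 := by rintro h; exact hj (by rw [ha, h, mul_zero]; rfl)
  have hcop : IsCoprime a b := Int.isCoprime_iff_gcd_eq_one.mpr hab
  have hsmul : a • β = b • α := by
    ext i
    have hi : α j * β i = α i * β j := hprop i j
    rw [ha, hb] at hi
    exact mul_right_cancel₀ hg (by simp only [Pi.smul_apply, smul_eq_mul]; linarith)
  rcases Int.isUnit_iff.mp (isUnit_of_smul_eq_smul hα hcop hsmul) with rfl | rfl <;>
    rcases Int.isUnit_iff.mp (isUnit_of_smul_eq_smul hβ hcop.symm hsmul.symm) with rfl | rfl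
  · exact .inl (by simpa using hsmul.symm)
  · exact .inr (by simpa using congr_arg Neg.neg hsmul.symm)
  · exact .inr (by simpa using hsmul.symm)
  · exact .inl (by simpa using hsmul.symm)

end Primitive

lemma sum_filter_nonneg_apply {σ : Type*} [Fintype σ] {S : Finset (σ → ℤ)} {i : σ}
    (hsign : ∀ x ∈ S, (∀ j, 0 ≤ x j) ∨ ∀ j, x j ≤ 0)
    (hi : ∀ x ∈ S, x i = -1 ∨ x i = 0 ∨ x i = 1) :
    (∑ x ∈ S.filter fun x => ∀ j, 0 ≤ x j, x) i = (S.filter fun x => 0 < x i).card := by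
  rw [Finset.sum_apply, Finset.card_filter, Finset.sum_filter, Nat.cast_sum]
  refine Finset.sum_congr rfl fun x hx => ?_
  have hxi := hi x hx
  split_ifs with hnonneg hpos hpos
  · push_cast; omega
  · have := hnonneg i; push_cast; omega
  · have := (hsign x hx).resolve_left hnonneg i; omega
  · rfl

namespace Data

variable (D : Data ι)

section Roots

/-- The `W`-orbit of `Δ`. The axioms do not record that `Δ` is stable under `W`, so `Δ` is
saturated in order to obtain `W`-invariant products of roots. -/
def roots : Finset (ι → ℤ) := (D.W_finite.toFinset ×ˢ D.Δ).image fun x => x.1 x.2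

variable {D} {w : (ι → ℤ) ≃ₗ[ℤ] (ι → ℤ)} {α β ω η : ι → ℤ}

lemma mem_roots : α ∈ D.roots ↔ ∃ w ∈ D.W, ∃ β ∈ D.Δ, w β = α := by
  simp only [roots, Finset.mem_image, Finset.mem_product, Set.Finite.mem_toFinset,
    SetLike.mem_coe, Prod.exists, and_assoc, exists_and_left]

lemma symm_mem (hw : w ∈ D.W) : w.symm ∈ D.W := D.W.inv_mem hw

lemma Δ_subset_roots : D.Δ ⊆ D.roots := fun α hα => mem_roots.mpr ⟨1, D.W.one_mem, α, hα, rfl⟩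

lemma map_mem_roots (hw : w ∈ D.W) (hα : α ∈ D.roots) : w α ∈ D.roots := by
  obtain ⟨u, hu, β, hβ, rfl⟩ := mem_roots.mp hα
  exact mem_roots.mpr ⟨w * u, D.W.mul_mem hw hu, β, hβ, rfl⟩

lemma map_mem_roots_iff (hw : w ∈ D.W) : w α ∈ D.roots ↔ α ∈ D.roots :=
  ⟨fun h => by simpa using map_mem_roots (symm_mem hw) h, map_mem_roots hw⟩

lemma neg_mem_roots (hα : α ∈ D.roots) : -α ∈ D.roots := by
  obtain ⟨u, hu, β, hβ, rfl⟩ := mem_roots.mp hα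
  exact mem_roots.mpr ⟨u, hu, -β, D.Δ_neg β hβ, map_neg u β⟩

lemma ne_zero_of_mem_roots (hα : α ∈ D.roots) : α ≠ 0 := by
  obtain ⟨u, _, β, hβ, rfl⟩ := mem_roots.mp hα
  intro h0
  have hpair := D.coroot_pair β hβ
  rw [u.map_eq_zero_iff.mp h0] at hpair
  simp [pairZ] at hpair

lemma isUnit_of_mem_roots_of_eq_smul (hα : α ∈ D.roots) (n : ℤ) (γ : ι → ℤ) (h : α = n • γ) :
    IsUnit n := by
  obtain ⟨u, _, β, hβ, rfl⟩ := mem_roots.mp hα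
  exact D.Δ_prim β hβ n (u.symm γ) (by rw [← map_smul, ← h, u.symm_apply_apply])

lemma exists_reflection (hα : α ∈ D.roots) :
    ∃ s ∈ D.W, s α = -α ∧ (∀ x, s.symm x = s x) ∧ ∀ x, ∃ n : ℤ, s x = x - n • α := by
  obtain ⟨u, hu, β, hβ, rfl⟩ := mem_roots.mp hα
  obtain ⟨r, hr, hrx⟩ := D.refl_mem β hβ
  have hrβ : r β = -β := by
    rw [hrx, reflMap, D.coroot_pair β hβ, two_smul, sub_add_cancel_left]
  have hrr : ∀ x, r (r x) = x := fun x => by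
    rw [hrx x, reflMap, map_sub, map_smul, hrβ, hrx x, reflMap, smul_neg, sub_neg_eq_add,
      sub_add_cancel]
  have hs : ∀ x, (u * r * u⁻¹) x = u (r (u.symm x)) := fun x => rfl
  refine ⟨u * r * u⁻¹, D.W.mul_mem (D.W.mul_mem hu hr) (D.W.inv_mem hu), ?_, fun x => ?_,
    fun x => ⟨pairZ (u.symm x) (D.coroot β), ?_⟩⟩
  · rw [hs, u.symm_apply_apply, hrβ, map_neg]
  · rw [LinearEquiv.symm_apply_eq, hs, hs, u.symm_apply_apply, hrr, u.apply_symm_apply]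
  · rw [hs, hrx, reflMap, map_sub, map_smul, u.apply_symm_apply]

lemma isRelPrime_linearForm (hα : α ∈ D.roots) (hβ : β ∈ D.roots) (hne : α ≠ β)
    (hne' : α ≠ -β) : IsRelPrime (linearForm (toV α)) (linearForm (toV β)) := by
  rw [(irreducible_linearForm (toV_ne_zero (ne_zero_of_mem_roots hα))).isRelPrime_iff_not_dvd]
  intro hdvd
  obtain ⟨a, ha⟩ := exists_eq_smul_of_linearForm_dvd hdvd
  have hβi : ∀ i, (β i : ℂ) = a * α i := congr_fun ha
  have hprop : ∀ i j, α j * β i = α i * β j := fun i j => by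
    have : (α j * β i : ℂ) = α i * β j := by rw [hβi i, hβi j]; ring
    exact_mod_cast this
  exact (eq_or_eq_neg_of_primitive (isUnit_of_mem_roots_of_eq_smul hα)
    (isUnit_of_mem_roots_of_eq_smul hβ) (ne_zero_of_mem_roots hα) hprop).elim hne hne'

end Roots

section Orbits

variable {D} {w : (ι → ℤ) ≃ₗ[ℤ] (ι → ℤ)} {ω η : ι → ℤ}

lemma map_mem_Φ (hw : w ∈ D.W) (hω : ω ∈ D.Φ) : w ω ∈ D.Φ := by
  obtain ⟨u, hu, i, rfl⟩ := (D.Φ_spec _).mp hω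
  exact (D.Φ_spec _).mpr ⟨w * u, D.W.mul_mem hw hu, i, rfl⟩

lemma map_mem_Φ_iff (hw : w ∈ D.W) : w ω ∈ D.Φ ↔ ω ∈ D.Φ :=
  ⟨fun h => by simpa using map_mem_Φ (symm_mem hw) h, map_mem_Φ hw⟩

variable (D) in
lemma e_mem_Φ (i : ι) : e i ∈ D.Φ := (D.Φ_spec _).mpr ⟨1, D.W.one_mem, i, rfl⟩

lemma actDual_mem_Λ₁ (hw : w ∈ D.W) (hη : η ∈ D.Λ₁) : actDual w η ∈ D.Λ₁ := by
  obtain ⟨u, hu, i, hi, rfl⟩ := (D.Λ₁_spec _).mp hη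
  exact (D.Λ₁_spec _).mpr ⟨w * u, D.W.mul_mem hw hu, i, hi, (actDual_mul _ _ _).symm⟩

lemma e_mem_Λ₁ {i : ι} (hi : D.ell i = 1) : e i ∈ D.Λ₁ :=
  (D.Λ₁_spec _).mpr ⟨1, D.W.one_mem, i, hi, (actDual_one _).symm⟩

lemma pairZ_ell_actDual (hw : w ∈ D.W) (η : ι → ℤ) :
    pairZ D.ell (actDual w η) = pairZ D.ell η := by
  rw [pairZ_actDual, D.C4 _ (symm_mem hw)]

lemma evalC_ell_actV (hw : w ∈ D.W) (z : ι → ℂ) : evalC D.ell (actV w z) = evalC D.ell z := by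
  rw [evalC_actV, D.C4 _ (symm_mem hw)]

lemma pairZ_ell_of_mem_Λ₁ (hη : η ∈ D.Λ₁) : pairZ D.ell η = 1 := by
  obtain ⟨u, hu, i, hi, rfl⟩ := (D.Λ₁_spec _).mp hη
  rw [pairZ_ell_actDual hu, pairZ_e_right, hi]

lemma apply_trichotomy_of_mem_Λ₁ (hη : η ∈ D.Λ₁) (i : ι) : η i = -1 ∨ η i = 0 ∨ η i = 1 := by
  obtain ⟨u, hu, j, hj, rfl⟩ := (D.Λ₁_spec _).mp hη
  rw [← pairZ_e_left i (actDual u (e j)), pairZ_actDual, pairZ_e_right]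
  exact D.C7 j hj _ (.inr (map_mem_Φ (symm_mem hu) (D.e_mem_Φ i)))

lemma filter_pairZ_actDual {S : Finset (ι → ℤ)} (hS : ∀ x, w x ∈ S ↔ x ∈ S) (η : ι → ℤ)
    (P : ℤ → Prop) [DecidablePred P] :
    (S.filter fun x => P (pairZ x (actDual w η))) =
      (S.filter fun x => P (pairZ x η)).map w.toEquiv.toEmbedding := by
  ext x
  simp only [Finset.mem_filter, Finset.mem_map_equiv, pairZ_actDual]
  exact and_congr_left' (by simpa using hS (w.symm x))

lemma card_filter_roots_actDual (hw : w ∈ D.W) (η : ι → ℤ) :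
    (D.roots.filter fun x => 0 < pairZ x (actDual w η)).card =
      (D.roots.filter fun x => 0 < pairZ x η).card := by
  rw [filter_pairZ_actDual (fun _ => map_mem_roots_iff hw) η (0 < ·), Finset.card_map]

lemma card_filter_Φ_actDual (hw : w ∈ D.W) (η : ι → ℤ) :
    (D.Φ.filter fun x => 0 < pairZ x (actDual w η)).card =
      (D.Φ.filter fun x => 0 < pairZ x η).card := by
  rw [filter_pairZ_actDual (fun _ => map_mem_Φ_iff hw) η (0 < ·), Finset.card_map]

lemma card_filter_Φ_le_of_ell_eq_one {i : ι} (hi : D.ell i = 1) :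
    (D.Φ.filter fun x => 0 < x i).card ≤ (D.roots.filter fun x => 0 < x i).card + 1 := by
  have hC5 := congr_fun D.C5 i
  rw [Pi.sub_apply, sum_filter_nonneg_apply D.C3 fun x hx => D.C7 i hi x (.inr hx),
    sum_filter_nonneg_apply D.C2 fun x hx => D.C7 i hi x (.inl hx), hi] at hC5
  have hle := Finset.card_le_card
    (Finset.filter_subset_filter (fun x : ι → ℤ => 0 < x i) D.Δ_subset_roots)
  omega

lemma card_filter_Φ_le (hη : η ∈ D.Λ₁) :
    (D.Φ.filter fun x => 0 < pairZ x η).card ≤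
      (D.roots.filter fun x => 0 < pairZ x η).card + 1 := by
  obtain ⟨u, hu, i, hi, rfl⟩ := (D.Λ₁_spec _).mp hη
  rw [card_filter_Φ_actDual hu, card_filter_roots_actDual hu]
  simpa only [pairZ_e_right] using card_filter_Φ_le_of_ell_eq_one hi

end Orbits

end Data

section LinearForm

variable {σ : Type*} [Fintype σ]

lemma eval_linearForm_toV (γ : σ → ℤ) (z : σ → ℂ) :
    eval z (linearForm (toV γ)) = evalC γ z := eval_linearForm _ _

lemma linearForm_toV_neg (γ : σ → ℤ) : linearForm (toV (-γ)) = -linearForm (toV γ) := by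
  rw [← linearForm_neg]
  congr 1
  ext i
  simp [toV]

lemma eval_prod_linearForm_sub (k : (σ → ℤ) → ℂ) (z : σ → ℂ) (S : Finset (σ → ℤ)) :
    eval z (∏ ω ∈ S, (linearForm (toV ω) - C (k ω))) = ∏ ω ∈ S, (evalC ω z - k ω) := by
  simp only [eval_prod, map_sub, eval_linearForm_toV, eval_C]

end LinearForm

namespace Data

variable (D : Data ι)

section Invariants

/-- The algebra `P^W` of `W`-invariant polynomials. -/
def invariants : Subalgebra ℂ (MvPolynomial ι ℂ) where
  carrier := {p | D.WInv p}
  mul_mem' hp hq w hw z := by simp only [map_mul, hp w hw, hq w hw]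
  add_mem' hp hq w hw z := by simp only [map_add, hp w hw, hq w hw]
  algebraMap_mem' a w _ z := by simp only [algebraMap_eq, eval_C]

variable {D} {w : (ι → ℤ) ≃ₗ[ℤ] (ι → ℤ)} {α : ι → ℤ} {p q : MvPolynomial ι ℂ}

lemma mem_invariants : p ∈ D.invariants ↔ D.WInv p := Iff.rfl

/-- The pullback `z ↦ p (w • z)` of a polynomial function `p`. -/
def pullback (w : (ι → ℤ) ≃ₗ[ℤ] (ι → ℤ)) : MvPolynomial ι ℂ →ₐ[ℂ] MvPolynomial ι ℂ :=
  aeval fun i => linearForm (toV (w.symm (e i)))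

lemma eval_pullback (w : (ι → ℤ) ≃ₗ[ℤ] (ι → ℤ)) (z : ι → ℂ) (p : MvPolynomial ι ℂ) :
    eval z (pullback w p) = eval (actV w z) p := by
  change aeval z (aeval _ p) = aeval (actV w z) p
  rw [← AlgHom.comp_apply, comp_aeval]
  congr 1
  ext i
  simp only [aeval_X]
  exact eval_linearForm_toV _ _

lemma wInv_iff_pullback_eq : D.WInv p ↔ ∀ w ∈ D.W, pullback w p = p := by
  refine forall₂_congr fun w _ => ?_
  rw [MvPolynomial.funext_iff]
  simp only [eval_pullback]

lemma WInv.of_mul (hp : D.WInv p) (hp0 : p ≠ 0) (hpq : D.WInv (p * q)) : D.WInv q := by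
  rw [wInv_iff_pullback_eq] at *
  intro w hw
  refine mul_left_cancel₀ hp0 ?_
  rw [← hpq w hw, map_mul, hp w hw]

/-- If `N = α M` is invariant then `M` is antisymmetric under `s_α`, hence vanishes on its
mirror. -/
lemma linearForm_mul_linearForm_neg_dvd (hp : D.WInv p) (hα : α ∈ D.roots)
    (hdvd : linearForm (toV α) ∣ p) :
    linearForm (toV α) * linearForm (toV (-α)) ∣ p := by
  obtain ⟨q, rfl⟩ := hdvd
  obtain ⟨s, hs, hsα, hsymm, hrefl⟩ := exists_reflection hα
  have hα0 := toV_ne_zero (ne_zero_of_mem_roots hα)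
  have hpull : pullback s (linearForm (toV α)) = -linearForm (toV α) := by
    rw [← linearForm_toV_neg]
    refine MvPolynomial.funext fun z => ?_
    rw [eval_pullback, eval_linearForm_toV, eval_linearForm_toV, evalC_actV, hsymm, hsα]
  have hanti : pullback s q = -q := by
    refine mul_left_cancel₀ (linearForm_ne_zero hα0) ?_
    have hinv := wInv_iff_pullback_eq.mp hp s hs
    rw [map_mul, hpull, neg_mul] at hinv
    rw [mul_neg, ← hinv, neg_neg]
  rw [linearForm_toV_neg]
  refine mul_dvd_mul_left _ ((neg_dvd).mpr ?_)
  refine linearForm_dvd_of_forall_eval_eq_zero hα0 fun z (hz : evalC α z = 0) => ?_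
  have hfix : actV s z = z := evalC_left_injective fun γ => by
    obtain ⟨n, hn⟩ := hrefl γ
    rw [evalC_actV, hsymm, hn, evalC_sub_left, evalC_smul_left, hz, mul_zero, sub_zero]
  have heval := congr_arg (eval z) hanti
  rw [eval_pullback, hfix, map_neg] at heval
  exact self_eq_neg.mp heval

end Invariants

section RootProduct

/-- The product of all roots, as a polynomial function on `V`. -/
def rootProd : MvPolynomial ι ℂ := ∏ α ∈ D.roots, linearForm (toV α)

lemma toV_root_ne_zero : ∀ α ∈ D.roots, toV α ≠ 0 := fun _ hα =>
  toV_ne_zero (ne_zero_of_mem_roots hα)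

lemma rootProd_ne_zero : D.rootProd ≠ 0 :=
  Finset.prod_ne_zero_iff.mpr fun α hα => linearForm_ne_zero (D.toV_root_ne_zero α hα)

lemma totalDegree_rootProd : D.rootProd.totalDegree = D.roots.card :=
  totalDegree_prod_linearForm _ D.toV_root_ne_zero

lemma eval_rootProd (z : ι → ℂ) : eval z D.rootProd = ∏ α ∈ D.roots, evalC α z := by
  simp only [rootProd, eval_prod, eval_linearForm_toV]

lemma wInv_rootProd : D.WInv D.rootProd := by
  intro w hw z
  simp only [eval_rootProd, evalC_actV]
  exact Finset.prod_equiv w.symm.toEquiv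
    (fun α => (map_mem_roots_iff (symm_mem hw)).symm) fun _ _ => rfl

variable {D} {p : MvPolynomial ι ℂ}

lemma rootProd_eq_prod_filter (hheight : ∀ α ∈ D.roots, ∑ i, α i ≠ 0) :
    D.rootProd = ∏ α ∈ D.roots.filter (fun α => 0 < ∑ i, α i),
      (linearForm (toV α) * linearForm (toV (-α))) := by
  rw [rootProd, ← Finset.prod_filter_mul_prod_filter_not D.roots (fun α => 0 < ∑ i, α i),
    Finset.prod_mul_distrib]
  congr 1
  refine (Finset.prod_equiv (Equiv.neg _) (fun α => ?_) fun _ _ => rfl).symm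
  simp only [Finset.mem_filter, Equiv.neg_apply, Pi.neg_apply, Finset.sum_neg_distrib]
  constructor
  · exact fun ⟨hα, _⟩ => ⟨neg_mem_roots hα, by omega⟩
  · rintro ⟨hα, hneg⟩
    have hα' : α ∈ D.roots := by simpa using neg_mem_roots hα
    exact ⟨hα', by have := hheight α hα'; omega⟩

lemma rootProd_dvd (hheight : ∀ α ∈ D.roots, ∑ i, α i ≠ 0) (hp : D.WInv p)
    (hdvd : ∀ α ∈ D.roots, linearForm (toV α) ∣ p) : D.rootProd ∣ p := by
  rw [rootProd_eq_prod_filter hheight]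
  refine Finset.prod_dvd_of_isRelPrime (fun α hα β hβ hne => ?_) fun α hα =>
    linearForm_mul_linearForm_neg_dvd hp (Finset.mem_filter.mp hα).1
      (hdvd α (Finset.mem_filter.mp hα).1)
  obtain ⟨hαR, hαpos⟩ := Finset.mem_filter.mp hα
  obtain ⟨hβR, hβpos⟩ := Finset.mem_filter.mp hβ
  have hne' : α ≠ -β := by
    rintro rfl
    simp only [Pi.neg_apply, Finset.sum_neg_distrib] at hαpos
    omega
  have hrel := isRelPrime_linearForm hαR hβR hne hne'
  simp only [Function.onFun, linearForm_toV_neg, mul_neg, IsRelPrime.neg_left_iff,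
    IsRelPrime.neg_right_iff]
  exact (hrel.mul_right hrel).mul_left (hrel.mul_right hrel)

end RootProduct

end Data

namespace Data

section MultiplicityParameters

variable {D : Data ι} {ρ : ι → ℂ} {k : (ι → ℤ) → ℂ}

lemma IsK.apply_e (hk : D.IsK ρ k) (i : ι) : k (e i) = ρ i :=
  hk (e i) i ⟨1, D.W.one_mem, .inl rfl⟩

lemma IsK.apply_map (hk : D.IsK ρ k) {w : (ι → ℤ) ≃ₗ[ℤ] (ι → ℤ)} (hw : w ∈ D.W) {ω : ι → ℤ}
    (hω : ω ∈ D.Φ) : k (w ω) = k ω := by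
  obtain ⟨u, hu, i, rfl⟩ := (D.Φ_spec _).mp hω
  rw [hk (u (e i)) i ⟨u.symm, symm_mem hu, by simp⟩,
    hk (w (u (e i))) i ⟨(w * u).symm, symm_mem (D.W.mul_mem hw hu), .inl ?_⟩]
  exact ((w * u).symm_apply_apply (e i)).symm

lemma exists_isK (hρ : D.InV0 ρ) : ∃ k, D.IsK ρ k := by
  let P (ω : ι → ℤ) (i : ι) : Prop := ∃ w ∈ D.W, e i = w ω ∨ e i = -(w ω)
  refine ⟨fun ω => if hω : ∃ i, P ω i then ρ hω.choose else 0, fun ω i hi => ?_⟩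
  have hω : ∃ i, P ω i := ⟨i, hi⟩
  simp only [dif_pos hω]
  refine hρ _ _ ?_
  obtain ⟨u, hu, hju⟩ := hω.choose_spec
  obtain ⟨w, hw, hiw⟩ := hi
  refine ⟨u * w⁻¹, D.W.mul_mem hu (D.W.inv_mem hw), ?_⟩
  have hwω : (u * w⁻¹) (w ω) = u ω := congr_arg u (w.symm_apply_apply ω)
  rcases hju with hju | hju <;> rcases hiw with hiw | hiw <;>
    simp only [hju, hiw, map_neg, hwω, neg_neg, true_or, or_true]

end MultiplicityParameters

section DifferenceOperator

variable (D : Data ι) (k : (ι → ℤ) → ℂ) (η : ι → ℤ) (p : MvPolynomial ι ℂ)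

/-- The product of the roots that do not occur in the denominator of `f_η`. As the pairings
`α(η)` of `α ∈ W·Δ` are not known to be `1`, their product is included as a normalization. -/
def cofactor : MvPolynomial ι ℂ :=
  C (∏ α ∈ D.roots.filter (fun α => 0 < pairZ α η), (pairZ α η : ℂ)) *
    ∏ α ∈ D.roots.filter (fun α => ¬0 < pairZ α η), linearForm (toV α)

/-- The polynomial obtained from the rational function `f_η` by multiplication with `rootProd`. -/
def numerator : MvPolynomial ι ℂ :=
  (∏ ω ∈ D.Φ.filter (fun ω => 0 < pairZ ω η), (linearForm (toV ω) - C (k ω))) * D.cofactor η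

/-- The polynomial `rootProd · L(p)`, where `L = Σ_{η ∈ Λ₁} f_η T_η`. -/
def shiftSum : MvPolynomial ι ℂ := ∑ η ∈ D.Λ₁, D.numerator k η * translate (toV η) p

/-- Knop's difference operator `L = Σ_{η ∈ Λ₁} f_η T_η` on polynomials; the value is junk unless
`rootProd` divides `shiftSum`, which holds for invariant `p`. -/
def diffOp : MvPolynomial ι ℂ := if h : D.rootProd ∣ D.shiftSum k p then h.choose else 0

lemma eval_shiftSum (z : ι → ℂ) :
    eval z (D.shiftSum k p) = ∑ η ∈ D.Λ₁, eval z (D.numerator k η) * eval (z - toV η) p := by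
  simp only [shiftSum, map_sum, map_mul, eval_translate]

lemma eval_cofactor (z : ι → ℂ) : eval z (D.cofactor η) =
    (∏ α ∈ D.roots.filter (fun α => 0 < pairZ α η), (pairZ α η : ℂ)) *
      ∏ α ∈ D.roots.filter (fun α => ¬0 < pairZ α η), evalC α z := by
  simp only [cofactor, map_mul, eval_prod, eval_linearForm_toV, eval_C]

variable {D k η p} {ρ : ι → ℂ} {w : (ι → ℤ) ≃ₗ[ℤ] (ι → ℤ)}

lemma eval_actV_cofactor (hw : w ∈ D.W) (z : ι → ℂ) :
    eval (actV w z) (D.cofactor (actDual w η)) = eval z (D.cofactor η) := by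
  have hroots (α : ι → ℤ) : w α ∈ D.roots ↔ α ∈ D.roots := map_mem_roots_iff hw
  rw [eval_cofactor, eval_cofactor, filter_pairZ_actDual hroots η (0 < ·),
    filter_pairZ_actDual hroots η (¬0 < ·), Finset.prod_map, Finset.prod_map]
  simp only [Equiv.coe_toEmbedding, LinearEquiv.coe_toEquiv, evalC_actV, pairZ_actDual,
    LinearEquiv.symm_apply_apply]

lemma eval_actV_numerator (hk : D.IsK ρ k) (hw : w ∈ D.W) (z : ι → ℂ) :
    eval (actV w z) (D.numerator k (actDual w η)) = eval z (D.numerator k η) := by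
  rw [numerator, numerator, map_mul, map_mul, eval_actV_cofactor hw, eval_prod_linearForm_sub,
    eval_prod_linearForm_sub, filter_pairZ_actDual (fun _ => map_mem_Φ_iff hw) η (0 < ·),
    Finset.prod_map]
  congr 1
  refine Finset.prod_congr rfl fun ω hω => ?_
  simp only [Equiv.coe_toEmbedding, LinearEquiv.coe_toEquiv, evalC_actV,
    LinearEquiv.symm_apply_apply, hk.apply_map hw (Finset.mem_filter.mp hω).1]

lemma wInv_shiftSum (hk : D.IsK ρ k) (hp : D.WInv p) : D.WInv (D.shiftSum k p) := by
  intro w hw z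
  rw [eval_shiftSum, eval_shiftSum]
  refine (Finset.sum_bij' (fun η _ => actDual w η) (fun η _ => actDual w⁻¹ η)
    (fun η => actDual_mem_Λ₁ hw) (fun η => actDual_mem_Λ₁ (D.W.inv_mem hw))
    (fun η _ => ?_) (fun η _ => ?_) fun η _ => ?_).symm
  · rw [← actDual_mul, inv_mul_cancel, actDual_one]
  · rw [← actDual_mul, mul_inv_cancel, actDual_one]
  · rw [eval_actV_numerator hk hw, toV_actDual, ← actV_sub, hp w hw]

variable (η) in
/-- If `α` is cancelled by the denominator of `f_η`, the opposite root `-α` is not. -/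
lemma linearForm_dvd_cofactor {α : ι → ℤ} (hα : α ∈ D.roots) :
    linearForm (toV α) ∣ D.cofactor η := by
  refine Dvd.dvd.mul_left ?_ _
  by_cases hpos : 0 < pairZ α η
  · rw [← neg_dvd, ← linearForm_toV_neg]
    refine Finset.dvd_prod_of_mem _ (Finset.mem_filter.mpr ⟨neg_mem_roots hα, ?_⟩)
    rw [pairZ_neg_left]
    omega
  · exact Finset.dvd_prod_of_mem (fun α => linearForm (toV α))
      (Finset.mem_filter.mpr ⟨hα, hpos⟩)

lemma rootProd_dvd_shiftSum (hheight : ∀ α ∈ D.roots, ∑ i, α i ≠ 0) (hk : D.IsK ρ k)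
    (hp : D.WInv p) : D.rootProd ∣ D.shiftSum k p :=
  rootProd_dvd hheight (wInv_shiftSum hk hp) fun _ hα => Finset.dvd_sum fun η _ =>
    ((linearForm_dvd_cofactor η hα).mul_left _).mul_right _

lemma rootProd_mul_diffOp (hheight : ∀ α ∈ D.roots, ∑ i, α i ≠ 0) (hk : D.IsK ρ k)
    (hp : D.WInv p) : D.rootProd * D.diffOp k p = D.shiftSum k p := by
  have hdvd := rootProd_dvd_shiftSum hheight hk hp
  rw [diffOp, dif_pos hdvd, ← hdvd.choose_spec]

lemma wInv_diffOp (hheight : ∀ α ∈ D.roots, ∑ i, α i ≠ 0) (hk : D.IsK ρ k)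
    (hp : D.WInv p) : D.WInv (D.diffOp k p) := by
  refine D.wInv_rootProd.of_mul D.rootProd_ne_zero ?_
  rw [rootProd_mul_diffOp hheight hk hp]
  exact wInv_shiftSum hk hp

end DifferenceOperator

end Data

section PositiveVectors

lemma eq_e_of_sum_eq_one {σ : Type*} [Fintype σ] [DecidableEq σ] {x : σ → ℤ}
    (hsign : (∀ i, 0 ≤ x i) ∨ ∀ i, x i ≤ 0) (hsum : ∑ i, x i = 1) : ∃ j, x = e j := by
  have hnonneg : ∀ i, 0 ≤ x i := hsign.resolve_right fun h => by
    have := Finset.sum_nonpos fun i (_ : i ∈ Finset.univ) => h i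
    omega
  obtain ⟨j, -, hj⟩ := Finset.exists_ne_zero_of_sum_ne_zero (hsum ▸ one_ne_zero)
  have hle : ∀ i, e j i ≤ x i := fun i => by
    rcases eq_or_ne i j with rfl | hij
    · rw [e, Pi.single_eq_same]
      have := hnonneg i
      omega
    · rw [e, Pi.single_eq_of_ne hij]
      exact hnonneg i
  have hsum_eq : ∑ i, e j i = ∑ i, x i := by rw [hsum, e, Finset.sum_pi_single']; simp
  exact ⟨j, funext fun i => (((Finset.sum_eq_sum_iff_of_le fun i _ => hle i).mp hsum_eq) i
    (Finset.mem_univ i)).symm⟩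

lemma e_mem_LamPlus {σ : Type*} [DecidableEq σ] (i : σ) : e i ∈ LamPlus :=
  Pi.single_nonneg (α := fun _ => ℤ) |>.mpr zero_le_one

end PositiveVectors

namespace Data

section Heights

variable {D : Data ι} {ρ : ι → ℂ} {w : (ι → ℤ) ≃ₗ[ℤ] (ι → ℤ)} {α lam : ι → ℤ}
  {p : MvPolynomial ι ℂ}

lemma CapelliAt.actDual_eq (hp : D.CapelliAt ρ lam p) (hlam : lam ∈ LamPlus) (hw : w ∈ D.W)
    (hfix : actV w ρ = ρ) (hmem : actDual w lam ∈ LamPlus) : actDual w lam = lam := by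
  obtain ⟨hinv, -, hval⟩ := hp
  have hshift : actV w (ρ + toV lam) = ρ + toV (actDual w lam) := by
    rw [actV_add, hfix, toV_actDual]
  have heval := hinv w hw (ρ + toV lam)
  rw [hshift, hval _ hmem (pairZ_ell_actDual hw lam).le, hval _ hlam le_rfl] at heval
  by_contra hne
  simp [hne] at heval

lemma exists_reflection_permuting (hα : α ∈ D.roots) (h0 : ∑ i, α i = 0) :
    ∃ s ∈ D.W, s α = -α ∧ (∀ x, s.symm x = s x) ∧ ∀ j, ∃ j', s (e j) = e j' := by
  obtain ⟨s, hs, hsα, hsymm, hrefl⟩ := exists_reflection hα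
  refine ⟨s, hs, hsα, hsymm, fun j =>
    eq_e_of_sum_eq_one (D.C3 _ (map_mem_Φ hs (D.e_mem_Φ j))) ?_⟩
  obtain ⟨n, hn⟩ := hrefl (e j)
  simp only [hn, Pi.sub_apply, Pi.smul_apply, smul_eq_mul, Finset.sum_sub_distrib,
    ← Finset.mul_sum, h0]
  simp [e]

/-- A reflection in a root of height zero would permute `Σ`, hence fix `ρ` and move some element
of `Σ^∨`, contradicting the existence of the Capelli polynomials of the elements of `Σ^∨`. -/
lemma sum_ne_zero_of_mem_roots (hρ : D.InV0 ρ) (hcap : ∀ i, ∃ p, D.CapelliAt ρ (e i) p) :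
    ∀ α ∈ D.roots, ∑ i, α i ≠ 0 := by
  intro α hα h0
  obtain ⟨s, hs, hsα, hsymm, hperm⟩ := exists_reflection_permuting hα h0
  have hfix : actV s ρ = ρ := funext fun i => by
    obtain ⟨i', hi'⟩ := hperm i
    rw [actV, hsymm, hi', evalC_e]
    exact hρ _ _ ⟨s, hs, .inl hi'.symm⟩
  have hdual : ∀ j, actDual s (e j) = e j := fun j => by
    obtain ⟨p, hp⟩ := hcap j
    refine hp.actDual_eq (e_mem_LamPlus j) hs hfix fun i => ?_
    obtain ⟨i', hi'⟩ := hperm i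
    rw [actDual, hsymm, hi', pairZ_e_left]
    exact e_mem_LamPlus j i'
  have hα_fixed : s α = α := funext fun j => by
    rw [← pairZ_e_right (s α), ← hsymm, ← pairZ_actDual, hdual, pairZ_e_right]
  exact ne_zero_of_mem_roots hα (neg_eq_self.mp (hsα.symm.trans hα_fixed))

end Heights

section Degree

variable {D : Data ι} {ρ ρ' : ι → ℂ} {k k' : (ι → ℤ) → ℂ} {η : ι → ℤ}
  {p : MvPolynomial ι ℂ}

lemma totalDegree_cofactor_le (η : ι → ℤ) :
    (D.cofactor η).totalDegree ≤ (D.roots.filter fun α => ¬0 < pairZ α η).card := by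
  refine (totalDegree_mul _ _).trans ?_
  rw [totalDegree_C, zero_add]
  exact (totalDegree_prod_linearForm _ fun α hα =>
    D.toV_root_ne_zero α (Finset.mem_filter.mp hα).1).le

lemma leadingEq_numerator (k k' : (ι → ℤ) → ℂ) (hη : η ∈ D.Λ₁) :
    LeadingEq (D.roots.card + 1) (D.numerator k η) (D.numerator k' η) := by
  refine ((LeadingEq.prod _ fun ω _ => LeadingEq.sub_C (totalDegree_linearForm_le _) _ _).mul
    (.refl (totalDegree_cofactor_le η))).mono ?_
  rw [← Finset.card_eq_sum_ones]
  have hΦ := card_filter_Φ_le hη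
  have hsplit := Finset.card_filter_add_card_filter_not (s := D.roots) (fun α => 0 < pairZ α η)
  omega

lemma totalDegree_numerator_le (k : (ι → ℤ) → ℂ) (hη : η ∈ D.Λ₁) :
    (D.numerator k η).totalDegree ≤ D.roots.card + 1 :=
  (leadingEq_numerator k k hη).left_le

lemma mem_degreeLT_of_rootProd_mul {n : ℕ}
    (h : D.rootProd * p ∈ degreeLT ι ℂ (D.roots.card + n)) : p ∈ degreeLT ι ℂ n :=
  mem_degreeLT_of_mul_mem D.rootProd_ne_zero (by rwa [totalDegree_rootProd])

lemma wInv_one : D.WInv 1 := D.invariants.one_mem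

lemma rootProd_mul_diffOp_one (hheight : ∀ α ∈ D.roots, ∑ i, α i ≠ 0) (hk : D.IsK ρ k) :
    D.rootProd * D.diffOp k 1 = ∑ η ∈ D.Λ₁, D.numerator k η := by
  simp only [rootProd_mul_diffOp hheight hk wInv_one, shiftSum, map_one, mul_one]

lemma totalDegree_diffOp_one_le (hheight : ∀ α ∈ D.roots, ∑ i, α i ≠ 0) (hk : D.IsK ρ k) :
    (D.diffOp k 1).totalDegree ≤ 1 := by
  rw [← mem_degreeLT_succ]
  apply mem_degreeLT_of_rootProd_mul
  rw [rootProd_mul_diffOp_one hheight hk]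
  exact sum_mem fun η hη => mem_degreeLT_succ.mpr (totalDegree_numerator_le k hη)

lemma exists_diffOp_one_eq_add_C (hheight : ∀ α ∈ D.roots, ∑ i, α i ≠ 0) (hk : D.IsK ρ k)
    (hk' : D.IsK ρ' k') : ∃ b, D.diffOp k' 1 = D.diffOp k 1 + C b := by
  have hmem : D.diffOp k' 1 - D.diffOp k 1 ∈ degreeLT ι ℂ 1 := by
    apply mem_degreeLT_of_rootProd_mul
    rw [mul_sub, rootProd_mul_diffOp_one hheight hk, rootProd_mul_diffOp_one hheight hk',
      ← Finset.sum_sub_distrib]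
    exact sum_mem fun η hη => (leadingEq_numerator k' k hη).sub_mem
  rw [mem_degreeLT_succ, Nat.le_zero, totalDegree_eq_zero_iff_eq_C] at hmem
  exact ⟨_, sub_eq_iff_eq_add'.mp hmem⟩

lemma totalDegree_diffOp_one_mul_sub_diffOp_le (hheight : ∀ α ∈ D.roots, ∑ i, α i ≠ 0)
    (hk : D.IsK ρ k) (hp : D.WInv p) {d : ℕ} (hd : p.totalDegree ≤ d) :
    (D.diffOp k 1 * p - D.diffOp k p).totalDegree ≤ d := by
  rw [← mem_degreeLT_succ]
  apply mem_degreeLT_of_rootProd_mul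
  rw [mul_sub, ← mul_assoc, rootProd_mul_diffOp_one hheight hk, rootProd_mul_diffOp hheight hk hp,
    shiftSum, Finset.sum_mul, ← Finset.sum_sub_distrib, add_comm d, ← add_assoc]
  refine sum_mem fun η hη => ?_
  rw [← mul_sub]
  exact mul_mem_degreeLT (totalDegree_numerator_le k hη) (sub_translate_mem_degreeLT _ hd)

end Degree

end Data

namespace Data

section Genericity

variable {D : Data ι} {z : ι → ℂ} {k : (ι → ℤ) → ℂ} {η μ : ι → ℤ}

variable (D) in
/-- A point of `V` at which no root of `W` takes an integral value. All its translates by `Γ^∨`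
then avoid the poles of the operator `L`. -/
def IsGeneric (z : ι → ℂ) : Prop := ∀ α ∈ D.roots, ∀ n : ℤ, evalC α z ≠ n

lemma IsGeneric.evalC_add_toV_ne_zero (hz : D.IsGeneric z) (μ : ι → ℤ) {α : ι → ℤ}
    (hα : α ∈ D.roots) : evalC α (z + toV μ) ≠ 0 := by
  rw [evalC_add_right, evalC_toV, ne_eq, add_eq_zero_iff_eq_neg, ← Int.cast_neg]
  exact hz α hα _

lemma IsGeneric.eval_rootProd_ne_zero (hz : D.IsGeneric z) (μ : ι → ℤ) :
    eval (z + toV μ) D.rootProd ≠ 0 := by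
  rw [eval_rootProd]
  exact Finset.prod_ne_zero_iff.mpr fun α hα => hz.evalC_add_toV_ne_zero μ hα

lemma dense_isGeneric_add_const (hheight : ∀ α ∈ D.roots, ∑ i, α i ≠ 0) (z : ι → ℂ) :
    Dense {t : ℂ | D.IsGeneric (z + fun _ => t)} := by
  let bad (α : ι → ℤ) (n : ℤ) : Set ℂ := {t | evalC α (z + fun _ => t) = n}
  have hbad : ∀ α ∈ D.roots, ∀ n, (bad α n).Subsingleton := fun α hα n t ht s hs => by
    have hne : (∑ i, (α i : ℂ)) ≠ 0 := mod_cast hheight α hα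
    refine mul_left_cancel₀ hne ?_
    have heq : evalC α (z + fun _ => t) = evalC α (z + fun _ => s) :=
      Eq.trans (b := (n : ℂ)) ht (Eq.symm hs)
    simpa only [evalC_add_right, add_right_inj, evalC_const] using heq
  have hcount : (⋃ α ∈ D.roots, ⋃ n, bad α n).Countable :=
    D.roots.countable_toSet.biUnion fun α hα =>
      Set.countable_iUnion fun n => (hbad α hα n).countable
  convert hcount.dense_compl ℂ using 1
  ext t
  simp only [bad, IsGeneric, Set.mem_ofPred_eq, Set.mem_compl_iff, Set.mem_iUnion, not_exists]

lemma InV0.add_const {ρ : ι → ℂ} (hρ : D.InV0 ρ) (t : ℂ) : D.InV0 (ρ + fun _ => t) :=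
  fun i j hij => by simp only [Pi.add_apply, hρ i j hij]

end Genericity

section Vanishing

variable {D : Data ι} {ρ : ι → ℂ} {k : (ι → ℤ) → ℂ} {η μ : ι → ℤ} {p : MvPolynomial ι ℂ}

lemma eval_numerator_eq_zero (hk : D.IsK ρ k) (hμ : μ ∈ LamPlus) (hη : η ∈ D.Λ₁)
    (hmem : μ - η ∉ LamPlus) : eval (ρ + toV μ) (D.numerator k η) = 0 := by
  obtain ⟨i, hi⟩ : ∃ i, μ i - η i < 0 := by
    simpa only [LamPlus, Set.mem_ofPred_eq, not_forall, not_le, Pi.sub_apply] using hmem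
  have hμi : 0 ≤ μ i := hμ i
  have hηi := apply_trichotomy_of_mem_Λ₁ hη i
  have hμ0 : μ i = 0 := by omega
  rw [numerator, map_mul, eval_prod_linearForm_sub, Finset.prod_eq_zero (i := e i), zero_mul]
  · rw [Finset.mem_filter, pairZ_e_left]
    exact ⟨D.e_mem_Φ i, by omega⟩
  · rw [hk.apply_e, evalC_e, Pi.add_apply, toV, hμ0, Int.cast_zero, add_zero, sub_self]

lemma rootProd_mul_diffOp_apply (hheight : ∀ α ∈ D.roots, ∑ i, α i ≠ 0) (hk : D.IsK ρ k)
    (hp : D.WInv p) (hμ : μ ∈ LamPlus) :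
    eval (ρ + toV μ) D.rootProd * eval (ρ + toV μ) (D.diffOp k p) =
      ∑ η ∈ D.Λ₁ with μ - η ∈ LamPlus,
        eval (ρ + toV μ) (D.numerator k η) * eval (ρ + toV (μ - η)) p := by
  rw [← map_mul, rootProd_mul_diffOp hheight hk hp, eval_shiftSum, Finset.sum_filter]
  refine Finset.sum_congr rfl fun η hη => ?_
  split_ifs with hmem
  · rw [toV_sub, add_sub_assoc]
  · rw [eval_numerator_eq_zero hk hμ hη hmem, zero_mul]

lemma IsGeneric.eval_diffOp_eq_zero (hheight : ∀ α ∈ D.roots, ∑ i, α i ≠ 0)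
    (hρ : D.IsGeneric ρ) (hk : D.IsK ρ k) (hp : D.WInv p) (hμ : μ ∈ LamPlus)
    (hvan : ∀ η ∈ D.Λ₁, μ - η ∈ LamPlus → eval (ρ + toV (μ - η)) p = 0) :
    eval (ρ + toV μ) (D.diffOp k p) = 0 := by
  refine (mul_eq_zero.mp ?_).resolve_left (hρ.eval_rootProd_ne_zero μ)
  rw [rootProd_mul_diffOp_apply hheight hk hp hμ]
  refine Finset.sum_eq_zero fun η hη => ?_
  obtain ⟨hη, hmem⟩ := Finset.mem_filter.mp hη
  rw [hvan η hη hmem, mul_zero]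

variable (D) in
lemma pairZ_ell_nonneg (hμ : μ ∈ LamPlus) : 0 ≤ pairZ D.ell μ :=
  Finset.sum_nonneg fun i _ => mul_nonneg (D.C6 i).le (hμ i)

lemma eq_zero_of_pairZ_ell_eq_zero (hμ : μ ∈ LamPlus) (h0 : pairZ D.ell μ = 0) : μ = 0 :=
  funext fun i => (mul_eq_zero.mp ((Finset.sum_eq_zero_iff_of_nonneg fun i _ =>
    mul_nonneg (D.C6 i).le (hμ i)).mp h0 i (Finset.mem_univ i))).resolve_left (D.C6 i).ne'

lemma pairZ_ell_sub_of_mem_Λ₁ (hη : η ∈ D.Λ₁) (μ : ι → ℤ) :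
    pairZ D.ell (μ - η) = pairZ D.ell μ - 1 := by
  rw [pairZ_sub_right, pairZ_ell_of_mem_Λ₁ hη]

lemma IsGeneric.eval_diffOp_one_eq_zero (hheight : ∀ α ∈ D.roots, ∑ i, α i ≠ 0)
    (hρ : D.IsGeneric ρ) (hk : D.IsK ρ k) : eval ρ (D.diffOp k 1) = 0 := by
  rw [← add_zero ρ, ← toV_zero]
  refine hρ.eval_diffOp_eq_zero hheight hk wInv_one (fun _ => le_rfl) fun η hη hmem => ?_
  have hnonneg := D.pairZ_ell_nonneg hmem
  rw [pairZ_ell_sub_of_mem_Λ₁ hη, pairZ_zero_right] at hnonneg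
  omega

lemma filter_e_sub_mem_LamPlus {i : ι} (hi : D.ell i = 1) :
    (D.Λ₁.filter fun η => e i - η ∈ LamPlus) = {e i} := by
  ext η
  rw [Finset.mem_filter, Finset.mem_singleton]
  constructor
  · rintro ⟨hη, hmem⟩
    refine (sub_eq_zero.mp (eq_zero_of_pairZ_ell_eq_zero (D := D) hmem ?_)).symm
    rw [pairZ_ell_sub_of_mem_Λ₁ hη, pairZ_e_right, hi, sub_self]
  · rintro rfl
    exact ⟨e_mem_Λ₁ hi, fun _ => by simp⟩

end Vanishing

section LeadingCoefficient

variable {D : Data ι} {ρ : ι → ℂ} {k : (ι → ℤ) → ℂ} {p : MvPolynomial ι ℂ}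

lemma IsGeneric.prod_mul_eval_diffOp_one (hheight : ∀ α ∈ D.roots, ∑ i, α i ≠ 0)
    (hρ : D.IsGeneric ρ) (hk : D.IsK ρ k) {i : ι} (hi : D.ell i = 1) :
    (∏ α ∈ D.roots.filter (fun α => 0 < α i), evalC α (ρ + toV (e i))) *
        eval (ρ + toV (e i)) (D.diffOp k 1) =
      (∏ ω ∈ D.Φ.filter (fun ω => 0 < ω i), (evalC ω (ρ + toV (e i)) - k ω)) *
        ∏ α ∈ D.roots.filter (fun α => 0 < α i), (α i : ℂ) := by
  have hmul := rootProd_mul_diffOp_apply hheight hk wInv_one (e_mem_LamPlus i)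
  rw [filter_e_sub_mem_LamPlus hi, Finset.sum_singleton, map_one, mul_one, eval_rootProd,
    numerator, map_mul, eval_prod_linearForm_sub, eval_cofactor,
    ← Finset.prod_filter_mul_prod_filter_not D.roots (fun α => 0 < α i)] at hmul
  simp only [pairZ_e_right] at hmul
  have hne : ∏ α ∈ D.roots.filter (fun α => ¬0 < α i), evalC α (ρ + toV (e i)) ≠ 0 :=
    Finset.prod_ne_zero_iff.mpr fun α hα =>
      hρ.evalC_add_toV_ne_zero _ (Finset.mem_filter.mp hα).1
  refine mul_right_cancel₀ hne ?_
  linear_combination hmul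

/-- The linear part of `L(1)` does not depend on `ρ`, so it may be computed for the constant
parameters `ρ = (t, …, t)`, where it is found from the values at `ρ` and `ρ + e i` as `t → 0`. -/
lemma coeff_diffOp_one (hheight : ∀ α ∈ D.roots, ∑ i, α i ≠ 0) (hk : D.IsK ρ k) {a : ℂ}
    {c : ι → ℂ} (hc : D.diffOp k 1 = C a + linearForm c) {i : ι} (hi : D.ell i = 1) :
    c i = 1 := by
  have hdense : Dense {t : ℂ | D.IsGeneric fun _ => t} := by
    simpa only [zero_add] using dense_isGeneric_add_const hheight 0
  let pt (t : ℂ) : ι → ℂ := (fun _ => t) + toV (e i)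
  have hpt (γ : ι → ℤ) (t : ℂ) : evalC γ (pt t) = (∑ j, (γ j : ℂ)) * t + γ i := by
    simp only [pt, evalC_add_right, evalC_toV, pairZ_e_right, evalC_const]
  have hgeneric : ∀ t ∈ {t : ℂ | D.IsGeneric fun _ => t},
      (∏ α ∈ D.roots.filter (fun α => 0 < α i), evalC α (pt t)) * c i =
        (∏ ω ∈ D.Φ.filter (fun ω => 0 < ω i), (evalC ω (pt t) - t)) *
          ∏ α ∈ D.roots.filter (fun α => 0 < α i), (α i : ℂ) := fun t ht => by
    have ht : D.IsGeneric (fun _ => t) := ht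
    have hkt : D.IsK (fun _ => t) (fun _ => t) := fun _ _ _ => rfl
    obtain ⟨b, hb⟩ := exists_diffOp_one_eq_add_C hheight hk hkt
    have h0 := ht.eval_diffOp_one_eq_zero hheight hkt
    have h1 : eval (pt t) (D.diffOp (fun _ => t) 1) = c i := by
      rw [← sub_zero (eval _ _), ← h0, hb, hc]
      simp [pt, eval_linearForm, toV_e, dotProduct_add]
    rw [← h1]
    exact ht.prod_mul_eval_diffOp_one hheight hkt hi
  simp only [hpt] at hgeneric
  have hlim := congr_fun (Continuous.ext_on hdense (by fun_prop) (by fun_prop) hgeneric) 0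
  have hne : ∏ α ∈ D.roots.filter (fun α => 0 < α i), (α i : ℂ) ≠ 0 :=
    Finset.prod_ne_zero_iff.mpr fun α hα => mod_cast (Finset.mem_filter.mp hα).2.ne'
  have hΦ : ∏ ω ∈ D.Φ.filter (fun ω => 0 < ω i), (ω i : ℂ) = 1 :=
    Finset.prod_eq_one fun ω hω => by
      obtain ⟨hωΦ, hpos⟩ := Finset.mem_filter.mp hω
      have hωi : ω i = 1 := by have := D.C7 i hi ω (.inr hωΦ); omega
      rw [hωi, Int.cast_one]
  simp only [mul_zero, zero_add, sub_zero, hΦ, one_mul] at hlim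
  exact mul_left_cancel₀ hne (hlim.trans (mul_one _).symm)

lemma exists_diffOp_one_eq (hheight : ∀ α ∈ D.roots, ∑ i, α i ≠ 0) (hk : D.IsK ρ k) :
    ∃ a, D.diffOp k 1 = C a + linearForm (toV D.ell) := by
  obtain ⟨a, c, hc⟩ := exists_eq_C_add_linearForm (totalDegree_diffOp_one_le hheight hk)
  refine ⟨a, hc.trans ?_⟩
  congr 2
  refine D.C8 _ _ (fun w hw z => ?_) (fun w hw z => evalC_ell_actV hw z) fun i hi => ?_
  · have hinv := wInv_diffOp hheight hk wInv_one w hw z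
    rwa [hc, map_add, map_add, eval_C, eval_C, add_right_inj, eval_linearForm,
      eval_linearForm] at hinv
  · rw [coeff_diffOp_one hheight hk hc hi, toV, hi, Int.cast_one]

/-- The operator `p ↦ ℓ p - L(p)`. Its definition as a difference of two operators that raise the
degree by one hides that it preserves degrees. -/
def ellSubDiffOp (D : Data ι) (k : (ι → ℤ) → ℂ) (p : MvPolynomial ι ℂ) : MvPolynomial ι ℂ :=
  linearForm (toV D.ell) * p - D.diffOp k p

lemma totalDegree_ellSubDiffOp_le (hheight : ∀ α ∈ D.roots, ∑ i, α i ≠ 0) (hk : D.IsK ρ k)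
    (hp : D.WInv p) {d : ℕ} (hd : p.totalDegree ≤ d) :
    (D.ellSubDiffOp k p).totalDegree ≤ d := by
  obtain ⟨a, ha⟩ := exists_diffOp_one_eq hheight hk
  have hsplit : D.ellSubDiffOp k p = (D.diffOp k 1 * p - D.diffOp k p) - C a * p := by
    rw [ellSubDiffOp, ha]
    ring
  rw [hsplit]
  refine (totalDegree_sub _ _).trans
    (max_le (totalDegree_diffOp_one_mul_sub_diffOp_le hheight hk hp hd) ?_)
  refine (totalDegree_mul _ _).trans ?_
  rwa [totalDegree_C, zero_add]

lemma wInv_ellSubDiffOp (hheight : ∀ α ∈ D.roots, ∑ i, α i ≠ 0) (hk : D.IsK ρ k)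
    (hp : D.WInv p) : D.WInv (D.ellSubDiffOp k p) := by
  intro w hw z
  simp only [ellSubDiffOp, map_sub, map_mul, eval_linearForm_toV, evalC_ell_actV hw, hp w hw,
    wInv_diffOp hheight hk hp w hw]

end LeadingCoefficient

end Data

section LinearAlgebra

lemma linearIndependent_of_triangular {X A R : Type*} [LinearOrder A] [Ring R] (level : X → A)
    {u : X → X → R} (hu : ∀ x y, level x ≤ level y → u y x = if x = y then 1 else 0) :
    LinearIndependent R u := by
  rw [linearIndependent_iff']
  by_contra! hne
  obtain ⟨s, g, hsum, x, hx, hgx⟩ := hne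
  obtain ⟨y, hy, hmin⟩ := (s.filter fun x => g x ≠ 0).exists_min_image level
    ⟨x, Finset.mem_filter.mpr ⟨hx, hgx⟩⟩
  obtain ⟨hys, hgy⟩ := Finset.mem_filter.mp hy
  have hsum_y := congr_fun hsum y
  rw [Finset.sum_apply, Finset.sum_eq_single y (fun z hz hzy => ?_) (absurd hys)] at hsum_y
  · simp [hu y y le_rfl, hgy] at hsum_y
  · rw [Pi.smul_apply, smul_eq_mul]
    by_cases hgz : g z = 0
    · rw [hgz, zero_mul]
    · rw [hu y z (hmin z (Finset.mem_filter.mpr ⟨hz, hgz⟩)), if_neg hzy.symm, mul_zero]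

/-- Cramer's rule, multiplied by the determinant, defines the solution `q t` of the interpolation
problem at all `t`, including those where the problem is singular. -/
lemma exists_continuous_interpolation {T K M S : Type*} [TopologicalSpace T] [Field K]
    [TopologicalSpace K] [IsTopologicalRing K] [AddCommGroup M] [Module K M] [Finite S]
    {f : T → M →ₗ[K] S → K} (hf : ∀ m, Continuous fun t => f t m) {t₀ : T}
    (hbij : Function.Bijective (f t₀)) (v : S → K) :
    ∃ (δ : T → K) (q : T → M), Continuous δ ∧ δ t₀ = 1 ∧ (∀ t, f t (q t) = δ t • v) ∧
      (∀ t, δ t ≠ 0 → Function.Injective (f t)) ∧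
      ∀ g : T → M →ₗ[K] K, (∀ m, Continuous fun t => g t m) → Continuous fun t => g t (q t) := by
  classical
  cases nonempty_fintype S
  let E : M ≃ₗ[K] S → K := LinearEquiv.ofBijective (f t₀) hbij
  let A (t : T) : Matrix S S K := LinearMap.toMatrix' (f t ∘ₗ E.symm.toLinearMap)
  have hA : Continuous A := continuous_matrix fun i j => by
    simp only [A, LinearMap.toMatrix'_apply]
    exact (continuous_apply i).comp (hf (E.symm (Pi.single j 1)))
  have hA₀ : A t₀ = 1 := by
    have hid : f t₀ ∘ₗ E.symm.toLinearMap = LinearMap.id :=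
      LinearMap.ext fun x => E.apply_symm_apply x
    simp only [A, hid, LinearMap.toMatrix'_id]
  have hAE (t : T) (x : S → K) : f t (E.symm x) = (A t).mulVec x :=
    (LinearMap.toMatrix'_mulVec (f t ∘ₗ E.symm.toLinearMap) x).symm
  refine ⟨fun t => (A t).det, fun t => E.symm ((A t).cramer v), hA.matrix_det,
    by simp only [hA₀, Matrix.det_one], fun t => by rw [hAE, Matrix.mulVec_cramer],
    fun t ht m m' hm => E.injective (Matrix.mulVec_injective_of_det_ne_zero ht ?_),
    fun g hg => ?_⟩
  · rw [← hAE, ← hAE, E.symm_apply_apply, E.symm_apply_apply, hm]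
  · have hexpand (t : T) : g t (E.symm ((A t).cramer v)) =
        ∑ j, (A t).cramer v j * g t (E.symm (Pi.single j 1)) := by
      conv_lhs => rw [pi_eq_sum_univ' ((A t).cramer v)]
      simp only [map_sum, map_smul, smul_eq_mul]
    simp only [hexpand]
    exact continuous_finsetSum _ fun j _ =>
      ((continuous_apply j).comp (hA.matrix_cramer continuous_const)).mul (hg _)

end LinearAlgebra

namespace Data

section Interpolation

variable {D : Data ι} {ρ : ι → ℂ} {d : ℕ} {μ : ι → ℤ} {p : MvPolynomial ι ℂ}

variable (D) in
/-- The finite set of `μ ∈ Λ₊` with `ℓ(μ) ≤ d`, the interpolation nodes in degree `d`. -/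
def lamPlusLE (d : ℕ) : Finset (ι → ℤ) :=
  (Finset.Icc 0 fun _ => (d : ℤ)).filter fun μ => pairZ D.ell μ ≤ d

lemma mem_lamPlusLE : μ ∈ D.lamPlusLE d ↔ μ ∈ LamPlus ∧ pairZ D.ell μ ≤ d := by
  rw [lamPlusLE, Finset.mem_filter, Finset.mem_Icc]
  refine ⟨fun h => ⟨h.1.1, h.2⟩, fun ⟨hμ, hle⟩ => ⟨⟨hμ, fun i => ?_⟩, hle⟩⟩
  calc μ i ≤ D.ell i * μ i := le_mul_of_one_le_left (hμ i) (D.C6 i)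
    _ ≤ pairZ D.ell μ := Finset.single_le_sum (f := fun i => D.ell i * μ i)
        (fun j _ => mul_nonneg (D.C6 j).le (hμ j)) (Finset.mem_univ i)
    _ ≤ d := hle

variable (D) in
/-- The space of `W`-invariant polynomials of degree at most `d`. -/
def invariantsLE (d : ℕ) : Submodule ℂ (MvPolynomial ι ℂ) :=
  Subalgebra.toSubmodule D.invariants ⊓ degreeLT ι ℂ (d + 1)

lemma mem_invariantsLE : p ∈ D.invariantsLE d ↔ D.WInv p ∧ p.totalDegree ≤ d := by
  rw [invariantsLE, Submodule.mem_inf, mem_degreeLT_succ, Subalgebra.mem_toSubmodule,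
    mem_invariants]

variable (D) in
/-- The restriction of invariant polynomials of degree at most `d` to the interpolation nodes
`ρ + μ`, where `μ ∈ Λ₊` and `ℓ(μ) ≤ d`. -/
def evalOn (d : ℕ) (ρ : ι → ℂ) : D.invariantsLE d →ₗ[ℂ] D.lamPlusLE d → ℂ :=
  LinearMap.pi fun μ => (aeval (ρ + toV μ.1)).toLinearMap ∘ₗ (D.invariantsLE d).subtype

lemma evalOn_apply (ρ : ι → ℂ) (p : D.invariantsLE d) (μ : D.lamPlusLE d) :
    D.evalOn d ρ p μ = eval (ρ + toV μ.1) p.1 := rfl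

lemma eq_of_eval_eq (hinj : Function.Injective (D.evalOn d ρ)) {p q : MvPolynomial ι ℂ}
    (hp : p ∈ D.invariantsLE d) (hq : q ∈ D.invariantsLE d)
    (h : ∀ μ ∈ D.lamPlusLE d, eval (ρ + toV μ) p = eval (ρ + toV μ) q) : p = q :=
  congr_arg Subtype.val
    (hinj (funext fun μ => h μ.1 μ.2) : (⟨p, hp⟩ : D.invariantsLE d) = ⟨q, hq⟩)

variable (D) in
lemma exists_ell_eq_one [Nonempty ι] : ∃ i, D.ell i = 1 := by
  by_contra! hne
  have hell : toV D.ell = 0 := D.C8 _ _ (fun w hw z => evalC_ell_actV hw z)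
    (fun _ _ _ => by simp) fun i hi => absurd hi (hne i)
  obtain ⟨i⟩ := ‹Nonempty ι›
  exact (D.C6 i).ne' (Int.cast_eq_zero.mp (congr_fun hell i))

variable (D) in
lemma exists_mem_LamPlus_pairZ_ell_eq (p : MvPolynomial ι ℂ) :
    ∃ lam ∈ LamPlus, pairZ D.ell lam = p.totalDegree := by
  rcases isEmpty_or_nonempty ι with hι | hι
  · refine ⟨0, fun _ => le_rfl, ?_⟩
    rw [eq_C_of_isEmpty p, totalDegree_C, pairZ_zero_right, Nat.cast_zero]
  · obtain ⟨i, hi⟩ := D.exists_ell_eq_one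
    refine ⟨Pi.single i (p.totalDegree : ℤ),
      (Pi.single_nonneg (α := fun _ => ℤ)).mpr (Nat.cast_nonneg _), ?_⟩
    simp [pairZ, Pi.single_apply, hi]

/-- If `q ≠ 0` of degree `n` vanishes at the nodes, uniqueness of the Capelli polynomial `p` of
degree `n` forces `p + c q` to have degree less than `n` for all `c ≠ 0`, hence also `q`. -/
lemma C0.exists_injective_evalOn (hC0 : D.C0) :
    ∃ ρ', ∀ d, Function.Injective (D.evalOn d ρ') := by
  obtain ⟨ρ', -, -, -, hcap⟩ := hC0
  refine ⟨ρ', fun d => (injective_iff_map_eq_zero _).mpr fun ⟨q, hq⟩ hvan => ?_⟩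
  obtain ⟨hqW, hqd⟩ := mem_invariantsLE.mp hq
  obtain ⟨lam, hlam, hlevel⟩ := D.exists_mem_LamPlus_pairZ_ell_eq q
  obtain ⟨p, ⟨hpW, hpd, hpv⟩, huniq⟩ := hcap lam hlam
  rw [hlevel] at hpd hpv huniq
  rw [Int.toNat_natCast] at hpd huniq
  by_contra hne
  have hq0 : q ≠ 0 := fun h => hne (Subtype.ext h)
  have hdrop : ∀ c : ℂ, c ≠ 0 → p + c • q ∈ degreeLT ι ℂ q.totalDegree := by
    intro c hc
    by_contra hmem
    have hle : (p + c • q).totalDegree ≤ q.totalDegree :=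
      mem_degreeLT_succ.mp (add_mem (mem_degreeLT_succ.mpr hpd.le)
        (Submodule.smul_mem _ c (mem_degreeLT_succ.mpr le_rfl)))
    have hr0 : p + c • q ≠ 0 := fun h => hmem (h ▸ zero_mem _)
    have hge := not_lt.mp ((mem_degreeLT_iff_of_ne_zero hr0).not.mp hmem)
    have hval : ∀ μ : ι → ℤ, μ ∈ LamPlus → pairZ D.ell μ ≤ q.totalDegree →
        eval (ρ' + toV μ) (p + c • q) = if μ = lam then 1 else 0 := fun μ hμ hμd => by
      have hqμ : eval (ρ' + toV μ) q = 0 :=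
        congr_fun hvan ⟨μ, mem_lamPlusLE.mpr ⟨hμ, hμd.trans (mod_cast hqd)⟩⟩
      rw [map_add, smul_eval, hqμ, mul_zero, add_zero, hpv μ hμ hμd]
    have hinv : D.WInv (p + c • q) :=
      D.invariants.add_mem hpW (D.invariants.smul_mem hqW c)
    exact smul_ne_zero hc hq0 (add_eq_left.mp (huniq _ ⟨hinv, hle.antisymm hge, hval⟩))
  have hmem := sub_mem (hdrop 2 two_ne_zero) (hdrop 1 one_ne_zero)
  rw [add_sub_add_left_eq_sub, ← sub_smul, (by norm_num : (2 : ℂ) - 1 = 1), one_smul,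
    mem_degreeLT_iff_of_ne_zero hq0] at hmem
  exact lt_irrefl _ hmem

end Interpolation

end Data

namespace Data

section ExtraVanishing

variable {D : Data ι} {ρ : ι → ℂ} {pl : (ι → ℤ) → MvPolynomial ι ℂ} {lam μ : ι → ℤ} {d : ℕ}

lemma CapelliAt.mem_invariantsLE {p : MvPolynomial ι ℂ} (hp : D.CapelliAt ρ lam p)
    (hlam : pairZ D.ell lam ≤ d) : p ∈ D.invariantsLE d :=
  Data.mem_invariantsLE.mpr ⟨hp.1, mod_cast hp.2.1.trans hlam⟩

lemma surjective_evalOn (hpl : ∀ lam ∈ LamPlus, D.CapelliAt ρ lam (pl lam)) (d : ℕ) :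
    Function.Surjective (D.evalOn d ρ) := by
  have hcap (ν : D.lamPlusLE d) := hpl ν.1 (mem_lamPlusLE.mp ν.2).1
  let q (ν : D.lamPlusLE d) : D.invariantsLE d :=
    ⟨pl ν.1, (hcap ν).mem_invariantsLE (mem_lamPlusLE.mp ν.2).2⟩
  have hli : LinearIndependent ℂ (D.evalOn d ρ ∘ q) :=
    linearIndependent_of_triangular (fun ν => pairZ D.ell ν.1) fun κ ν hκν => by
      simp only [q, Function.comp_apply, evalOn_apply, Subtype.ext_iff,
        (hcap ν).2.2 κ.1 (mem_lamPlusLE.mp κ.2).1 hκν]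
  rw [← LinearMap.range_eq_top, eq_top_iff,
    ← hli.span_eq_top_of_card_eq_finrank' (Module.finrank_fintype_fun_eq_card ℂ).symm,
    Submodule.span_le]
  rintro _ ⟨ν, rfl⟩
  exact ⟨q ν, rfl⟩

lemma bijective_evalOn (hC0 : D.C0) (hpl : ∀ lam ∈ LamPlus, D.CapelliAt ρ lam (pl lam))
    (d : ℕ) : Function.Bijective (D.evalOn d ρ) := by
  obtain ⟨ρ', hinj⟩ := hC0.exists_injective_evalOn
  have hsurj := surjective_evalOn hpl d
  have : FiniteDimensional ℂ (D.invariantsLE d) := .of_injective _ (hinj d)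
  have hge : Module.finrank ℂ (D.lamPlusLE d → ℂ) ≤ Module.finrank ℂ (D.invariantsLE d) := by
    rw [← finrank_top, ← LinearMap.range_eq_top.mpr hsurj]
    exact LinearMap.finrank_range_le _
  have hrank := (LinearMap.finrank_le_finrank_of_injective (hinj d)).antisymm hge
  exact ⟨(LinearMap.injective_iff_surjective_of_finrank_eq_finrank hrank).mpr hsurj, hsurj⟩

/-- Both sides are invariant of degree at most `ℓ(λ)` and agree at the nodes. -/
lemma IsGeneric.ellSubDiffOp_eq_smul (hheight : ∀ α ∈ D.roots, ∑ i, α i ≠ 0)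
    (hρ : D.IsGeneric ρ) {k : (ι → ℤ) → ℂ} (hk : D.IsK ρ k) (hlam : pairZ D.ell lam = d)
    (hinj : Function.Injective (D.evalOn d ρ)) {q : MvPolynomial ι ℂ}
    (hq : q ∈ D.invariantsLE d)
    (hvan : ∀ μ ∈ D.lamPlusLE d, μ ≠ lam → eval (ρ + toV μ) q = 0) :
    D.ellSubDiffOp k q = evalC D.ell (ρ + toV lam) • q := by
  obtain ⟨hqW, hqd⟩ := mem_invariantsLE.mp hq
  refine eq_of_eval_eq hinj (mem_invariantsLE.mpr ⟨wInv_ellSubDiffOp hheight hk hqW,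
    totalDegree_ellSubDiffOp_le hheight hk hqW hqd⟩) (Submodule.smul_mem _ _ hq) fun μ hμ => ?_
  obtain ⟨hμ', hμd⟩ := mem_lamPlusLE.mp hμ
  have hdiff : eval (ρ + toV μ) (D.diffOp k q) = 0 :=
    hρ.eval_diffOp_eq_zero hheight hk hqW hμ' fun η hη hmem => by
      have hlevel := pairZ_ell_sub_of_mem_Λ₁ hη μ
      refine hvan _ (mem_lamPlusLE.mpr ⟨hmem, by omega⟩) fun heq => ?_
      rw [heq] at hlevel
      omega
  rw [ellSubDiffOp, map_sub, hdiff, sub_zero, map_mul, eval_linearForm_toV, smul_eval]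
  rcases eq_or_ne μ lam with rfl | hne
  · rfl
  · rw [hvan μ hμ hne, mul_zero, mul_zero]

/-- By `L(q) = (ℓ - ℓ(ρ + λ)) q`, the value of `q` at `ρ + μ` with `ℓ(μ) > ℓ(λ)` is a combination
of its values at the points `ρ + μ - η`, `η ∈ Λ₁`. -/
lemma IsGeneric.eval_eq_zero_of_sub_notMem (hheight : ∀ α ∈ D.roots, ∑ i, α i ≠ 0)
    (hρ : D.IsGeneric ρ) (hρV : D.InV0 ρ) (hlam : pairZ D.ell lam = d)
    (hinj : Function.Injective (D.evalOn d ρ)) {q : MvPolynomial ι ℂ}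
    (hq : q ∈ D.invariantsLE d)
    (hvan : ∀ μ ∈ D.lamPlusLE d, μ ≠ lam → eval (ρ + toV μ) q = 0) (hμ : μ ∈ LamPlus)
    (hnot : μ - lam ∉ D.Lam) : eval (ρ + toV μ) q = 0 := by
  obtain ⟨k, hk⟩ := exists_isK hρV
  induction hn : (pairZ D.ell μ).toNat using Nat.strong_induction_on generalizing μ with
  | _ n ih =>
    have hne : μ ≠ lam := by
      rintro rfl
      exact hnot (sub_self μ ▸ D.Lam.zero_mem)
    rcases le_or_gt (pairZ D.ell μ) d with hle | hlt
    · exact hvan μ (mem_lamPlusLE.mpr ⟨hμ, hle⟩) hne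
    have hdiff : eval (ρ + toV μ) (D.diffOp k q) = 0 :=
      hρ.eval_diffOp_eq_zero hheight hk (mem_invariantsLE.mp hq).1 hμ fun η hη hmem => by
        have hlevel := pairZ_ell_sub_of_mem_Λ₁ hη μ
        refine ih _ (by omega) hmem (fun hmem' => hnot ?_) rfl
        rw [← sub_add_cancel (μ - lam) η, sub_right_comm]
        exact D.Lam.add_mem hmem' (AddSubmonoid.subset_closure hη)
    have heigen := congr_arg (eval (ρ + toV μ))
      (hρ.ellSubDiffOp_eq_smul hheight hk hlam hinj hq hvan)
    rw [ellSubDiffOp, map_sub, hdiff, sub_zero, map_mul, eval_linearForm_toV, smul_eval] at heigen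
    by_contra hqμ
    have hell := mul_right_cancel₀ hqμ heigen
    rw [evalC_add_right, evalC_add_right, add_right_inj, evalC_toV, evalC_toV, hlam,
      Int.cast_inj] at hell
    omega

/-- The Capelli polynomial is deformed along `ρ + (t, …, t)`, which is generic for most `t`. -/
lemma eval_capelli_eq_zero_of_sub_notMem (hC0 : D.C0) (hρ : D.InV0 ρ)
    (hpl : ∀ lam ∈ LamPlus, D.CapelliAt ρ lam (pl lam)) (hlam : lam ∈ LamPlus)
    (hμ : μ ∈ LamPlus) (hnot : μ - lam ∉ D.Lam) : eval (ρ + toV μ) (pl lam) = 0 := by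
  obtain ⟨d, hd⟩ := Int.eq_ofNat_of_zero_le (D.pairZ_ell_nonneg hlam)
  have hheight := sum_ne_zero_of_mem_roots hρ fun i => ⟨pl (e i), hpl _ (e_mem_LamPlus i)⟩
  have hcap := hpl lam hlam
  have hbij := bijective_evalOn hC0 hpl d
  let ρt (t : ℂ) : ι → ℂ := ρ + fun _ => t
  have hρ0 : ρt 0 = ρ := add_zero ρ
  have hcont (ν : ι → ℤ) (p : MvPolynomial ι ℂ) :
      Continuous fun t => eval (ρt t + toV ν) p :=
    (continuous_eval p).comp (by fun_prop)
  obtain ⟨δ, q, hδ, hδ0, hq, hinj, hqcont⟩ := exists_continuous_interpolation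
    (f := fun t => D.evalOn d (ρt t)) (t₀ := 0)
    (fun p => continuous_pi fun ν => hcont ν.1 p.1) (by rwa [hρ0])
    (Pi.single ⟨lam, mem_lamPlusLE.mpr ⟨hlam, hd.le⟩⟩ 1)
  have hq0 : (q 0).1 = pl lam := by
    refine eq_of_eval_eq hbij.1 (q 0).2 (hcap.mem_invariantsLE hd.le) fun ν hν => ?_
    have hqν := congr_fun (hq 0) ⟨ν, hν⟩
    obtain ⟨hν', hνd⟩ := mem_lamPlusLE.mp hν
    rw [hδ0, one_smul, hρ0, evalOn_apply, Pi.single_apply] at hqν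
    simp only [hqν, hcap.2.2 ν hν' (hνd.trans hd.ge), Subtype.mk.injEq]
  have hgeneric : ∀ t ∈ {t : ℂ | D.IsGeneric (ρt t)},
      δ t * eval (ρt t + toV μ) (q t).1 = 0 := fun t ht => by
    rcases eq_or_ne (δ t) 0 with hδt | hδt
    · rw [hδt, zero_mul]
    rw [IsGeneric.eval_eq_zero_of_sub_notMem hheight ht (hρ.add_const t) hd (hinj t hδt) (q t).2
      (fun ν hν hne => ?_) hμ hnot, mul_zero]
    simpa [evalOn_apply, Pi.single_apply, hne] using congr_fun (hq t) ⟨ν, hν⟩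
  have hcontq : Continuous fun t => eval (ρt t + toV μ) (q t).1 :=
    hqcont (fun t => (aeval (ρt t + toV μ)).toLinearMap ∘ₗ (D.invariantsLE d).subtype)
      fun p => hcont μ p.1
  have hzero := congr_fun (Continuous.ext_on (dense_isGeneric_add_const hheight ρ)
    (hδ.mul hcontq) continuous_const hgeneric) 0
  simpa only [Pi.mul_apply, hδ0, one_mul, hρ0, hq0] using hzero

end ExtraVanishing

section Expansion

variable {D : Data ι} {ρ : ι → ℂ} {pl : (ι → ℤ) → MvPolynomial ι ℂ} {μ ν : ι → ℤ}
  {T : Finset (ι → ℤ)} {c : (ι → ℤ) → ℂ}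

lemma linearIndepOn_capelli (hpl : ∀ lam ∈ LamPlus, D.CapelliAt ρ lam (pl lam)) :
    LinearIndepOn ℂ pl LamPlus :=
  LinearIndependent.of_comp
    (LinearMap.pi fun κ : (LamPlus : Set (ι → ℤ)) => (aeval (ρ + toV κ.1)).toLinearMap)
    (linearIndependent_of_triangular (fun ν => pairZ D.ell ν.1) fun κ ν hκν =>
      ((hpl ν.1 ν.2).2.2 κ.1 κ.2 hκν).trans (by simp only [Subtype.ext_iff]))

lemma sub_mem_Lam_of_coeff_ne_zero (hC0 : D.C0) (hρ : D.InV0 ρ)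
    (hpl : ∀ lam ∈ LamPlus, D.CapelliAt ρ lam (pl lam)) (hT : ∀ κ ∈ T, κ ∈ LamPlus)
    (hvan : ∀ κ ∈ LamPlus, κ - μ ∉ D.Lam → eval (ρ + toV κ) (∑ ν ∈ T, c ν • pl ν) = 0)
    (hν : ν ∈ T) (hcν : c ν ≠ 0) : ν - μ ∈ D.Lam := by
  by_contra hnot
  obtain ⟨κ, hκ, hmin⟩ := (T.filter fun ν => c ν ≠ 0 ∧ ν - μ ∉ D.Lam).exists_min_image
    (fun ν => pairZ D.ell ν) ⟨ν, Finset.mem_filter.mpr ⟨hν, hcν, hnot⟩⟩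
  obtain ⟨hκT, hcκ, hκnot⟩ := Finset.mem_filter.mp hκ
  have hκ' := hT κ hκT
  have hsum := hvan κ hκ' hκnot
  simp only [map_sum, smul_eval] at hsum
  rw [Finset.sum_eq_single κ (fun τ hτ hne => ?_) (absurd hκT)] at hsum
  · rw [(hpl κ hκ').2.2 κ hκ' le_rfl, if_pos rfl, mul_one] at hsum
    exact hcκ hsum
  · rcases eq_or_ne (c τ) 0 with hcτ | hcτ
    · rw [hcτ, zero_mul]
    by_cases hmem : τ - μ ∈ D.Lam
    · have hκτ : κ - τ ∉ D.Lam := fun h =>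
        hκnot (sub_add_sub_cancel κ τ μ ▸ D.Lam.add_mem h hmem)
      rw [eval_capelli_eq_zero_of_sub_notMem hC0 hρ hpl (hT τ hτ) hκ' hκτ, mul_zero]
    · rw [(hpl τ (hT τ hτ)).2.2 κ hκ' (hmin τ (Finset.mem_filter.mpr ⟨hτ, hcτ, hmem⟩)),
        if_neg hne.symm, mul_zero]

lemma pairZ_ell_le_of_coeff_ne_zero (hC0 : D.C0)
    (hpl : ∀ lam ∈ LamPlus, D.CapelliAt ρ lam (pl lam)) (hT : ∀ κ ∈ T, κ ∈ LamPlus) {d : ℕ}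
    (hdeg : (∑ ν ∈ T, c ν • pl ν).totalDegree ≤ d) (hν : ν ∈ T) (hcν : c ν ≠ 0) :
    pairZ D.ell ν ≤ d := by
  by_contra hlt
  have hinv : ∀ S ⊆ T, D.WInv (∑ ν ∈ S, c ν • pl ν) := fun S hS =>
    D.invariants.sum_mem fun τ hτ => D.invariants.smul_mem (hpl τ (hT τ (hS hτ))).1 _
  let low := T.filter fun τ => pairZ D.ell τ ≤ d
  let high := T.filter fun τ => ¬pairZ D.ell τ ≤ d
  have hlow : ∑ τ ∈ low, c τ • pl τ ∈ D.invariantsLE d := sum_mem fun τ hτ => by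
    obtain ⟨hτT, hτd⟩ := Finset.mem_filter.mp hτ
    exact Submodule.smul_mem _ _ ((hpl τ (hT τ hτT)).mem_invariantsLE hτd)
  have hhigh : ∑ τ ∈ high, c τ • pl τ ∈ D.invariantsLE d := by
    have hsplit := Finset.sum_filter_add_sum_filter_not T (fun τ => pairZ D.ell τ ≤ d)
      fun τ => c τ • pl τ
    rw [← eq_sub_iff_add_eq'] at hsplit
    rw [hsplit]
    exact sub_mem (mem_invariantsLE.mpr ⟨hinv T subset_rfl, hdeg⟩) hlow
  have hzero : ∑ τ ∈ high, c τ • pl τ = 0 := by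
    refine eq_of_eval_eq (bijective_evalOn hC0 hpl d).1 hhigh (zero_mem _) fun κ hκ => ?_
    obtain ⟨hκ', hκd⟩ := mem_lamPlusLE.mp hκ
    simp only [map_sum, smul_eval, map_zero]
    refine Finset.sum_eq_zero fun τ hτ => ?_
    obtain ⟨hτT, hτd⟩ := Finset.mem_filter.mp hτ
    have hne : κ ≠ τ := by rintro rfl; exact hτd hκd
    rw [(hpl τ (hT τ hτT)).2.2 κ hκ' (by omega), if_neg hne, mul_zero]
  exact hcν (linearIndepOn_iff'.mp (linearIndepOn_capelli hpl) high c
    (fun τ hτ => hT τ (Finset.mem_filter.mp hτ).1) hzero ν (Finset.mem_filter.mpr ⟨hν, hlt⟩))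

end Expansion

end Data

lemma eq_sum_smul_of_eval_eq_finsum {σ κ : Type*} {q : MvPolynomial σ ℂ}
    {p : κ → MvPolynomial σ ℂ} {a : κ → ℂ} (ha : (Function.support a).Finite)
    (h : ∀ z, eval z q = ∑ᶠ η, a η * eval z (p η)) : q = ∑ η ∈ ha.toFinset, a η • p η := by
  refine MvPolynomial.funext fun z => ?_
  rw [h, finsum_eq_sum_of_support_subset (s := ha.toFinset)]
  · simp only [map_sum, smul_eval]
  · rw [ha.coe_toFinset]
    exact Function.support_mul_subset_left _ _

theorem statement10_general (D : Data ι) (hC0 : D.C0)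
    (ρ : ι → ℂ) (hρ : D.InV0 ρ)
    (pl : (ι → ℤ) → MvPolynomial ι ℂ)
    (hpl : ∀ lam : ι → ℤ, lam ∈ LamPlus → D.CapelliAt ρ lam (pl lam))
    (h : MvPolynomial ι ℂ)
    (μ : ι → ℤ) (hμ : μ ∈ LamPlus)
    (a : (ι → ℤ) → ℂ) (hafin : (Function.support a).Finite)
    (ha0 : ∀ η : ι → ℤ, μ + η ∉ LamPlus → a η = 0)
    (haexp : ∀ z : ι → ℂ,
      eval z h * eval z (pl μ) = ∑ᶠ η : ι → ℤ, a η * eval z (pl (μ + η)))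
    (η : ι → ℤ) (hη : a η ≠ 0) :
    η ∈ D.Lam ∧ pairZ D.ell η ≤ (h.totalDegree : ℤ) := by
  let T := hafin.toFinset.map (addLeftEmbedding μ)
  have hexp : h * pl μ = ∑ ν ∈ T, a (ν - μ) • pl ν := by
    simpa [T] using eq_sum_smul_of_eval_eq_finsum (q := h * pl μ) hafin (by simpa using haexp)
  have hT : ∀ ν ∈ T, ν ∈ LamPlus := by
    simp only [T, Finset.mem_map, Set.Finite.mem_toFinset]
    rintro _ ⟨η', hη', rfl⟩
    exact by_contra fun hmem => hη' (ha0 η' hmem)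
  have hvan : ∀ κ ∈ LamPlus, κ - μ ∉ D.Lam →
      eval (ρ + toV κ) (∑ ν ∈ T, a (ν - μ) • pl ν) = 0 := fun κ hκ hnot => by
    rw [← hexp, map_mul, Data.eval_capelli_eq_zero_of_sub_notMem hC0 hρ hpl hμ hκ hnot, mul_zero]
  have hmemT : μ + η ∈ T := by simpa [T] using hη
  have hcoeff : a (μ + η - μ) ≠ 0 := by rwa [add_sub_cancel_left]
  constructor
  · simpa using Data.sub_mem_Lam_of_coeff_ne_zero hC0 hρ hpl hT hvan hmemT hcoeff
  · have hle := Data.pairZ_ell_le_of_coeff_ne_zero hC0 hpl hT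
      (hexp ▸ totalDegree_mul h (pl μ)) hmemT hcoeff
    have hdegμ := (hpl μ hμ).2.1
    rw [pairZ_add_right] at hle
    omega

/-- Proposition 3.1: assuming axiom C0, for dominant `ρ ∈ V₀`,
`h ∈ P^W` and `μ ∈ Λ₊`, the coefficients of `h·p_μ = Σ_η a_η^h(μ) p_{μ+η}`
vanish unless `η ∈ Λ` and `ℓ(η) ≤ deg h`. -/
theorem statement10 (D : Data ι) (hC0 : D.C0)
    (ρ : ι → ℂ) (hρ : D.InV0 ρ) (hdom : D.Dominant ρ)
    (pl : (ι → ℤ) → MvPolynomial ι ℂ)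
    (hpl : ∀ lam : ι → ℤ, lam ∈ LamPlus → D.CapelliAt ρ lam (pl lam))
    (h : MvPolynomial ι ℂ) (hh : D.WInv h)
    (μ : ι → ℤ) (hμ : μ ∈ LamPlus)
    (a : (ι → ℤ) → ℂ) (hafin : (Function.support a).Finite)
    (ha0 : ∀ η : ι → ℤ, μ + η ∉ LamPlus → a η = 0)
    (haexp : ∀ z : ι → ℂ,
      eval z h * eval z (pl μ) = ∑ᶠ η : ι → ℤ, a η * eval z (pl (μ + η)))
    (η : ι → ℤ) (hη : a η ≠ 0) :
    η ∈ D.Lam ∧ pairZ D.ell η ≤ (h.totalDegree : ℤ) :=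
  statement10_general D hC0 ρ hρ pl hpl h μ hμ a hafin ha0 haexp η hη

end Knop

end
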